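/- arXiv:2405.04501 — 2 statements merged into one kernel-verified Lean document; each statement's English description precedes it below -/
import Mathlib

section
/- Let d ≥ 3. There exist a constant C = C(d) > 0 and n_0 ∈ ℕ such that for all n ≥ n_0 and all y ∈ [−n/2, n/2)^d ∩ ℤ^d, |G_n^0(0, ȳ) − G_{ℤ^d}(0, y)| ≤ C·n^{2−d}; in particular, if |y| = Θ(n), then G_n^0(0, ȳ) = O(n^{2−d}). -/
open MeasureTheory ProbabilityTheory Filter Topology Matrix
open scoped Classical ENNReal

noncomputable section

/-- The massive lattice Green's function `G_{ℤ^d, m²}(x, y)`. -/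
def massGreenZ (d : ℕ) (m2 : ℝ) (x y : Fin d → ℤ) : ℝ :=
  ∫ t in Set.Icc (0 : Fin d → ℝ) 1,
    Real.cos (2 * Real.pi * ∑ i, ((x i : ℝ) - (y i : ℝ)) * t i) /
      (m2 + 2 * ∑ i, (1 - Real.cos (2 * Real.pi * t i)))

/-- The lattice Green's function `G_{ℤ^d}(x, y)` (for `d ≥ 3`). -/
def greenZ (d : ℕ) (x y : Fin d → ℤ) : ℝ := massGreenZ d 0 x y

/-- The critical inverse temperature `β_c = G_{ℤ^d}(0, 0)`. -/
def betaC (d : ℕ) : ℝ := greenZ d 0 0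

/-- The eigenvalues `η_w = 2 ∑_i (1 − cos(2π w_i / n))` of the discrete Laplacian on the
torus `T_n^d`. -/
def eta (d n : ℕ) (w : Fin d → Fin n) : ℝ :=
  2 * ∑ i, (1 - Real.cos (2 * Real.pi * ((w i : ℕ) : ℝ) / n))

/-- The massive Green's function `G_{n,m²}(x,y)` on the torus `T_n^d`. -/
def torusGreen (d n : ℕ) (m2 : ℝ) (x y : Fin d → ZMod n) : ℝ :=
  (1 / (n : ℝ) ^ d) * ∑ w : Fin d → Fin n,
    Real.cos (2 * Real.pi * (∑ i, ((w i : ℕ) : ℝ) * ((x i - y i).val : ℝ)) / n) /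
      (m2 + eta d n w)

/-- The zero-average Green's function `G_n^0(x,y)` on the torus `T_n^d` (`d ≥ 3`). -/
def torusGreen0 (d n : ℕ) (x y : Fin d → ZMod n) : ℝ :=
  (1 / (n : ℝ) ^ d) *
    ∑ w ∈ Finset.univ.filter (fun w : Fin d → Fin n => ∃ i, (w i : ℕ) ≠ 0),
      Real.cos (2 * Real.pi * (∑ i, ((w i : ℕ) : ℝ) * ((x i - y i).val : ℝ)) / n) / eta d n w


/-- One-dimensional symbol of the heat semigroup. -/
def gk (t s : ℝ) : ℝ := Real.exp (-(t * (2 * (1 - Real.cos (2 * Real.pi * s)))))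

/-- One-dimensional lattice heat kernel. -/
def Qf (t : ℝ) (m : ℤ) : ℂ :=
  ∫ s in (0:ℝ)..1, Complex.exp (2 * Real.pi * Complex.I * m * s) * (gk t s : ℂ)

/-- Laurent function on the punctured plane. -/
def fz (t : ℝ) (m : ℤ) (z : ℂ) : ℂ := z ^ m * Complex.exp (t * (z + z⁻¹) - 2 * t)

lemma fz_diff (t : ℝ) (m : ℤ) (z : ℂ) (hz : z ≠ 0) : DifferentiableAt ℂ (fz t m) z := by
  unfold fz
  have h1 : DifferentiableAt ℂ (fun z : ℂ => z ^ m) z := differentiableAt_zpow.2 (Or.inl hz)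
  have h2 : DifferentiableAt ℂ (fun z : ℂ => z⁻¹) z := differentiableAt_inv hz
  fun_prop

lemma circ_int (f : ℂ → ℂ) (R : ℝ) (hR : 0 < R) :
    (∮ z in C(0, R), (z - 0)⁻¹ • f z) =
      Complex.I * ∫ θ in (0:ℝ)..2 * Real.pi, f (circleMap 0 R θ) := by
  rw [circleIntegral, ← intervalIntegral.integral_const_mul]
  congr 1
  ext θ
  have h : circleMap 0 R θ ≠ 0 := circleMap_ne_center hR.ne'
  simp only [deriv_circleMap, smul_eq_mul, sub_zero]
  field_simp

lemma shift_le (t : ℝ) (m : ℤ) (r R : ℝ) (hr : 0 < r) (h : r ≤ R) :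
    ∫ θ in (0:ℝ)..2 * Real.pi, fz t m (circleMap 0 R θ) =
      ∫ θ in (0:ℝ)..2 * Real.pi, fz t m (circleMap 0 r θ) := by
  have := Complex.circleIntegral_sub_center_inv_smul_eq_of_differentiable_on_annulus_off_countable
    (c := 0) (f := fz t m) hr h Set.countable_empty ?_ ?_
  · rw [circ_int _ _ hr, circ_int _ _ (hr.trans_le h)] at this
    exact mul_left_cancel₀ Complex.I_ne_zero this
  · intro z hz
    apply (fz_diff t m z _).continuousAt.continuousWithinAt
    rintro rfl
    exact hz.2 (by simpa using hr)
  · intro z hz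
    apply fz_diff t m z
    rintro rfl
    exact hz.1.2 (by simpa using hr.le)

lemma shift_one (t : ℝ) (m : ℤ) (r : ℝ) (hr : 0 < r) :
    ∫ θ in (0:ℝ)..2 * Real.pi, fz t m (circleMap 0 1 θ) =
      ∫ θ in (0:ℝ)..2 * Real.pi, fz t m (circleMap 0 r θ) := by
  rcases le_total r 1 with h | h
  · exact shift_le t m r 1 hr h
  · exact (shift_le t m 1 r one_pos h).symm

lemma fz_circle (t : ℝ) (m : ℤ) (s : ℝ) :
    fz t m (circleMap 0 1 (2 * Real.pi * s)) =
      Complex.exp (2 * Real.pi * Complex.I * m * s) * (gk t s : ℂ) := by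
  unfold fz gk circleMap
  simp only [zero_add, Complex.ofReal_one, one_mul]
  rw [← Complex.exp_int_mul, ← Complex.exp_neg]
  push_cast
  rw [Complex.cos]
  congr 2 <;> ring_nf

lemma norm_fz (t : ℝ) (m : ℤ) (a θ : ℝ) :
    ‖fz t m (circleMap 0 (Real.exp a) θ)‖ =
      Real.exp (a * m) * Real.exp (t * (2 * Real.cosh a * Real.cos θ) - 2 * t) := by
  unfold fz circleMap
  have e : (0:ℂ) + (Real.exp a : ℝ) * Complex.exp (θ * Complex.I) =
      Complex.exp (a + θ * Complex.I) := by
    rw [Complex.exp_add]; push_cast; ring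
  rw [e, ← Complex.exp_neg, ← Complex.exp_int_mul, norm_mul, Complex.norm_exp, Complex.norm_exp]
  congr 2
  · simp; ring
  · simp [Complex.exp_re, Real.cosh_eq]
    left; ring

lemma Qf_eq (t : ℝ) (m : ℤ) (a : ℝ) :
    Qf t m = ∫ s in (0:ℝ)..1, fz t m (circleMap 0 (Real.exp a) (2 * Real.pi * s)) := by
  have hp : (2 * Real.pi : ℝ) ≠ 0 := by positivity
  have h1 := shift_one t m (Real.exp a) (Real.exp_pos a)
  have e : ∀ r : ℝ, ∫ s in (0:ℝ)..1, fz t m (circleMap 0 r (2 * Real.pi * s)) =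
      (2 * Real.pi : ℝ)⁻¹ • ∫ θ in (0:ℝ)..2 * Real.pi, fz t m (circleMap 0 r θ) := by
    intro r
    rw [intervalIntegral.integral_comp_mul_left (fun θ => fz t m (circleMap 0 r θ)) hp]
    simp
  rw [e, ← h1, ← e]
  unfold Qf
  simp_rw [fz_circle]

lemma one_sub_cos_ge (s : ℝ) (h0 : 0 ≤ s) (h1 : s ≤ 1) :
    8 * (min s (1 - s)) ^ 2 ≤ 1 - Real.cos (2 * Real.pi * s) := by
  have key : ∀ u : ℝ, 0 ≤ u → u ≤ 1/2 → 8 * u ^ 2 ≤ 1 - Real.cos (2 * Real.pi * u) := by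
    intro u hu hu'
    have hp := Real.pi_pos
    have := Real.mul_le_sin (x := Real.pi * u) (by positivity) (by nlinarith)
    have e : 2 / Real.pi * (Real.pi * u) = 2 * u := by field_simp
    rw [e] at this
    have c : Real.cos (2 * Real.pi * u) = 1 - 2 * Real.sin (Real.pi * u) ^ 2 := by
      rw [mul_assoc, Real.cos_two_mul, Real.cos_sq']; ring
    rw [c]
    nlinarith
  rcases le_total s (1 - s) with h | h
  · rw [min_eq_left h]; exact key s h0 (by linarith)
  · rw [min_eq_right h]
    have := key (1 - s) (by linarith) (by linarith)
    rw [show 2 * Real.pi * (1 - s) = 2 * Real.pi - 2 * Real.pi * s by ring,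
      Real.cos_two_pi_sub] at this
    exact this

lemma gk_le (t s : ℝ) (ht : 0 ≤ t) (h0 : 0 ≤ s) (h1 : s ≤ 1) :
    gk t s ≤ Real.exp 4 * (Real.exp (-(16 * (1 + t)) * s ^ 2) +
      Real.exp (-(16 * (1 + t)) * (1 - s) ^ 2)) := by
  have h := one_sub_cos_ge s h0 h1
  have h2 : min s (1 - s) ^ 2 ≤ 1 / 4 := by
    have a1 := min_le_left s (1 - s)
    have a2 := min_le_right s (1 - s)
    have : 0 ≤ min s (1 - s) := le_min h0 (by linarith)
    nlinarith
  have h3 : gk t s ≤ Real.exp 4 * Real.exp (-(16 * (1 + t)) * (min s (1 - s)) ^ 2) := by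
    rw [gk, ← Real.exp_add]
    apply Real.exp_le_exp.2
    have := mul_le_mul_of_nonneg_left h ht
    linarith
  refine h3.trans ?_
  gcongr
  rcases le_total s (1 - s) with h | h
  · rw [min_eq_left h]; linarith [Real.exp_pos (-(16 * (1 + t)) * (1 - s) ^ 2)]
  · rw [min_eq_right h]; linarith [Real.exp_pos (-(16 * (1 + t)) * s ^ 2)]

lemma gk_cont (t : ℝ) : Continuous (gk t) := by unfold gk; fun_prop

lemma gk_int_le (t : ℝ) (ht : 0 ≤ t) :
    ∫ s in (0:ℝ)..1, gk t s ≤ 2 * Real.exp 4 / √(1 + t) := by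
  have hb : 0 < 16 * (1 + t) := by positivity
  have I1 : Integrable (fun s : ℝ => Real.exp (-(16 * (1 + t)) * s ^ 2)) :=
    integrable_exp_neg_mul_sq hb
  have I2 : Integrable (fun s : ℝ => Real.exp (-(16 * (1 + t)) * (1 - s) ^ 2)) :=
    I1.comp_sub_left 1
  have v2 : ∫ s : ℝ, Real.exp (-(16 * (1 + t)) * (1 - s) ^ 2) = √(Real.pi / (16 * (1 + t))) := by
    rw [integral_sub_left_eq_self (fun s : ℝ => Real.exp (-(16 * (1 + t)) * s ^ 2)),
      integral_gaussian]
  have J : Integrable (fun s : ℝ => Real.exp 4 * (Real.exp (-(16 * (1 + t)) * s ^ 2) +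
      Real.exp (-(16 * (1 + t)) * (1 - s) ^ 2))) := (I1.add I2).const_mul _
  have step : ∫ s in (0:ℝ)..1, gk t s ≤ ∫ s : ℝ, Real.exp 4 * (Real.exp (-(16 * (1 + t)) * s ^ 2) +
      Real.exp (-(16 * (1 + t)) * (1 - s) ^ 2)) := by
    rw [intervalIntegral.integral_of_le zero_le_one]
    refine le_trans (setIntegral_mono_on (g := fun s : ℝ => Real.exp 4 * (Real.exp (-(16 * (1 + t)) * s ^ 2) +
      Real.exp (-(16 * (1 + t)) * (1 - s) ^ 2))) ?_ J.integrableOn measurableSet_Ioc ?_) ?_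
    · exact (gk_cont t).integrableOn_Ioc
    · intro s hs; exact gk_le t s ht hs.1.le hs.2
    · apply setIntegral_le_integral J
      filter_upwards with s
      positivity
  refine step.trans ?_
  rw [integral_const_mul, integral_add I1 I2, v2, integral_gaussian]
  have : √(Real.pi / (16 * (1 + t))) ≤ 1 / √(1 + t) := by
    rw [← Real.sqrt_one, ← Real.sqrt_div zero_le_one, Real.sqrt_one]
    apply Real.sqrt_le_sqrt
    rw [div_le_div_iff₀ hb (by positivity)]
    nlinarith [Real.pi_le_four]
  have e4 := Real.exp_pos 4
  calc _ = 2 * Real.exp 4 * √(Real.pi / (16 * (1 + t))) := by ring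
    _ ≤ 2 * Real.exp 4 * (1 / √(1 + t)) := by gcongr
    _ = _ := by ring

lemma cosh_sub_one_le (a : ℝ) (ha : a ^ 2 ≤ 1) : Real.cosh a - 1 ≤ 2 * a ^ 2 := by
  have h := Real.cosh_le_exp_half_sq a
  have h2 := Real.abs_exp_sub_one_le (x := a ^ 2 / 2) (by rw [abs_of_nonneg (by positivity)]; linarith)
  rw [abs_of_nonneg (a := a ^ 2 / 2) (by positivity)] at h2
  have := (abs_le.1 h2).2
  nlinarith

/-- Gaussian-type bound for the one-dimensional heat kernel. -/
lemma Qf_bound (t : ℝ) (ht : 0 ≤ t) (m : ℤ) :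
    ‖Qf t m‖ ≤ 2 * Real.exp 8 / √(1 + t) * Real.exp (-(|(m:ℝ)| / √(1 + t))) := by
  have hσ : 0 < √(1 + t) := by positivity
  have hσ2 : √(1 + t) ^ 2 = 1 + t := Real.sq_sqrt (by positivity)
  obtain ⟨a, ha, ham⟩ : ∃ a : ℝ, a ^ 2 = 1 / (1 + t) ∧ a * m = -(|(m:ℝ)| / √(1 + t)) := by
    rcases le_total 0 (m:ℝ) with h | h
    · refine ⟨-(1 / √(1 + t)), ?_, ?_⟩
      · rw [neg_sq, div_pow, hσ2, one_pow]
      · rw [abs_of_nonneg h]; ring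
    · refine ⟨(1 / √(1 + t)), ?_, ?_⟩
      · rw [div_pow, hσ2, one_pow]
      · rw [abs_of_nonpos h]; ring
  have ha1 : a ^ 2 ≤ 1 := by
    rw [ha, div_le_one (by positivity)]; linarith
  have hc := cosh_sub_one_le a ha1
  have hc1 := Real.one_le_cosh a
  have hta : t * a ^ 2 ≤ 1 := by
    rw [ha, mul_one_div, div_le_one (by positivity)]; linarith
  have htc : t * (Real.cosh a - 1) ≤ 2 := by nlinarith
  rw [Qf_eq t m a]
  have : ∀ s ∈ Set.Ioc (0:ℝ) 1, ‖fz t m (circleMap 0 (Real.exp a) (2 * Real.pi * s))‖ ≤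
      Real.exp (a * m) * Real.exp 4 * gk t s := by
    intro s _
    rw [norm_fz, mul_assoc (Real.exp (a * m))]
    gcongr
    rw [gk, ← Real.exp_add]
    apply Real.exp_le_exp.2
    have hcos := Real.cos_le_one (2 * Real.pi * s)
    have := mul_nonneg (mul_nonneg ht (sub_nonneg.2 hc1)) (sub_nonneg.2 hcos)
    nlinarith
  have n1 := intervalIntegral.norm_integral_le_of_norm_le (μ := volume) zero_le_one
    (f := fun s : ℝ => fz t m (circleMap 0 (Real.exp a) (2 * Real.pi * s)))
    (g := fun s => Real.exp (a * m) * Real.exp 4 * gk t s)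
    (Filter.Eventually.of_forall this) (((gk_cont t).const_mul _).intervalIntegrable _ _)
  refine n1.trans ?_
  rw [intervalIntegral.integral_const_mul, ham]
  calc _ ≤ Real.exp (-(|(m:ℝ)| / √(1 + t))) * Real.exp 4 * (2 * Real.exp 4 / √(1 + t)) := by
        gcongr; exact gk_int_le t ht
    _ = _ := by
        rw [show (8:ℝ) = 4 + 4 by norm_num, Real.exp_add]; ring


lemma hasSum_geo_int (r : ℝ) (h0 : 0 ≤ r) (h1 : r < 1) :
    HasSum (fun k : ℤ => if k = 0 then 0 else r ^ k.natAbs) (2 * (r / (1 - r))) := by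
  have hg := hasSum_geometric_of_lt_one h0 h1
  have h2 : HasSum (fun n : ℕ => r ^ (n + 1)) (r / (1 - r)) := by
    have := hg.mul_left r
    simpa [pow_succ', div_eq_mul_inv] using this
  have h3 : HasSum (fun n : ℕ => if ((n:ℕ):ℤ) = 0 then 0 else r ^ (n:ℤ).natAbs) (r / (1 - r)) := by
    rw [← hasSum_nat_add_iff' 1]
    simpa [show ∀ n : ℕ, ((n:ℤ) + 1 ≠ 0) by intro n; omega, show ∀ n : ℕ, ((n:ℤ) + 1).natAbs = n + 1 by intro n; omega] using h2
  rw [two_mul]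
  have h4 : (fun n : ℕ => if (-((n:ℤ) + 1)) = 0 then 0 else r ^ (-((n:ℤ) + 1)).natAbs) =
      fun n : ℕ => r ^ (n + 1) := by
    funext n
    rw [if_neg (by omega), show (-((n:ℤ) + 1)).natAbs = n + 1 by omega]
  rw [← h4] at h2
  exact HasSum.of_nat_of_neg_add_one (f := fun k : ℤ => if k = 0 then 0 else r ^ k.natAbs) h3 h2

lemma summable_Qf (t : ℝ) (ht : 0 ≤ t) : Summable (fun l : ℤ => Qf t l) := by
  have hσ : 0 < √(1 + t) := by positivity
  set r := Real.exp (-(1 / √(1 + t))) with hr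
  have r1 : r < 1 := by rw [hr, Real.exp_lt_one_iff]; simp [hσ]
  have hs := (hasSum_geo_int r (Real.exp_pos _).le r1).summable
  have hs2 : Summable (fun k : ℤ => r ^ k.natAbs) := by
    have := hs.add (summable_of_hasFiniteSupport (f := fun k : ℤ => if k = 0 then (1:ℝ) else 0)
      ((Set.finite_singleton 0).subset (by intro k; simp)))
    refine this.congr ?_
    intro k
    by_cases hk : k = 0 <;> simp [hk]
  refine Summable.of_norm_bounded (hs2.mul_left (2 * Real.exp 8 / √(1 + t))) ?_
  intro l
  refine (Qf_bound t ht l).trans_eq ?_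
  congr 1
  rw [hr, ← Real.exp_nat_mul, Nat.cast_natAbs]
  push_cast
  congr 1
  ring

lemma gk_periodic (t : ℝ) : Function.Periodic (fun s => (gk t s : ℂ)) 1 := by
  intro s
  simp only [gk]
  rw [mul_add, mul_one, Real.cos_add_two_pi]

instance factOnePos : Fact ((0:ℝ) < 1) := ⟨one_pos⟩

lemma fourier_gk (t : ℝ) (ht : 0 ≤ t) (s : ℝ) :
    HasSum (fun l : ℤ => Qf t (-l) * Complex.exp (2 * Real.pi * Complex.I * l * s)) (gk t s : ℂ) := by
  let F : C(AddCircle (1:ℝ), ℂ) := ⟨(gk_periodic t).lift,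
    continuous_coinduced_dom.mpr (by
      have := gk_cont t
      exact Complex.continuous_ofReal.comp this)⟩
  have hc : ∀ l, fourierCoeff F l = Qf t (-l) := by
    intro l
    rw [fourierCoeff_eq_intervalIntegral F l 0]
    unfold Qf
    simp only [div_one, one_smul, zero_add]
    congr 1
    ext x
    have : F (x : AddCircle (1:ℝ)) = (gk t x : ℂ) := (gk_periodic t).lift_coe x
    rw [this, fourier_coe_apply, smul_eq_mul]
    simp
  have hs : Summable (fourierCoeff F) := by
    have : Summable (fun l : ℤ => Qf t (-l)) :=
      (Equiv.neg ℤ).summable_iff.2 (summable_Qf t ht)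
    exact this.congr (fun l => (hc l).symm)
  have := has_pointwise_sum_fourier_series_of_summable hs (s : AddCircle (1:ℝ))
  have hF : F (s : AddCircle (1:ℝ)) = (gk t s : ℂ) := (gk_periodic t).lift_coe s
  rw [hF] at this
  convert this using 2 with l
  rw [hc, fourier_coe_apply, smul_eq_mul]
  simp

/-- One-dimensional torus heat kernel. -/
def An (n : ℕ) (t : ℝ) (j : ℤ) : ℂ :=
  (1 / (n : ℂ)) * ∑ w : Fin n,
    Complex.exp (2 * Real.pi * Complex.I * j * ((w : ℕ) / n : ℝ)) * (gk t ((w : ℕ) / n : ℝ) : ℂ)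

lemma orth (n : ℕ) (hn : 0 < n) (k : ℤ) :
    ∑ w : Fin n, Complex.exp (2 * Real.pi * Complex.I * k * ((w : ℕ) / n : ℝ)) =
      if (n : ℤ) ∣ k then (n : ℂ) else 0 := by
  have hn' : (n : ℂ) ≠ 0 := by exact_mod_cast hn.ne'
  set ζ := Complex.exp (2 * Real.pi * Complex.I * k / n) with hζ
  have e : ∀ w : Fin n, Complex.exp (2 * Real.pi * Complex.I * k * ((w : ℕ) / n : ℝ)) =
      ζ ^ (w : ℕ) := by
    intro w
    rw [hζ, ← Complex.exp_nat_mul]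
    congr 1
    push_cast
    ring
  simp_rw [e]
  rw [Fin.sum_univ_eq_sum_range (fun w => ζ ^ w)]
  have hζn : ζ ^ n = 1 := by
    rw [hζ, ← Complex.exp_nat_mul, Complex.exp_eq_one_iff]
    exact ⟨k, by field_simp⟩
  split_ifs with h
  · obtain ⟨q, rfl⟩ := h
    have : ζ = 1 := by
      rw [hζ, Complex.exp_eq_one_iff]
      exact ⟨q, by push_cast; field_simp⟩
    simp [this]
  · have h1 : ζ ≠ 1 := by
      intro h1
      rw [hζ, Complex.exp_eq_one_iff] at h1
      obtain ⟨q, hq⟩ := h1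
      apply h
      refine ⟨q, ?_⟩
      have hp : (2 * Real.pi * Complex.I : ℂ) ≠ 0 := Complex.two_pi_I_ne_zero
      have : (k : ℂ) = n * q := by
        rw [div_eq_iff hn'] at hq
        apply mul_left_cancel₀ hp
        rw [hq]; ring
      exact_mod_cast this
    rw [geom_sum_eq h1, hζn]; simp

lemma fold_sum (n : ℕ) (hn : 0 < n) (t : ℝ) (ht : 0 ≤ t) (j : ℤ) :
    HasSum (fun k : ℤ => Qf t (j - n * k)) (An n t j) := by
  have hn' : (n : ℂ) ≠ 0 := by exact_mod_cast hn.ne'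
  have h1 : HasSum (fun l : ℤ => (1 / (n:ℂ)) * ∑ w : Fin n,
      Complex.exp (2 * Real.pi * Complex.I * j * ((w : ℕ) / n : ℝ)) *
       (Qf t (-l) * Complex.exp (2 * Real.pi * Complex.I * l * ((w : ℕ) / n : ℝ)))) (An n t j) := by
    apply HasSum.mul_left
    apply hasSum_sum
    intro w _
    apply HasSum.mul_left
    exact fourier_gk t ht _
  have h2 : (fun l : ℤ => (1 / (n:ℂ)) * ∑ w : Fin n,
      Complex.exp (2 * Real.pi * Complex.I * j * ((w : ℕ) / n : ℝ)) *
       (Qf t (-l) * Complex.exp (2 * Real.pi * Complex.I * l * ((w : ℕ) / n : ℝ)))) =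
      fun l : ℤ => if (n:ℤ) ∣ j + l then Qf t (-l) else 0 := by
    ext l
    have : ∀ w : Fin n, Complex.exp (2 * Real.pi * Complex.I * j * ((w : ℕ) / n : ℝ)) *
       (Qf t (-l) * Complex.exp (2 * Real.pi * Complex.I * l * ((w : ℕ) / n : ℝ))) =
       Qf t (-l) * Complex.exp (2 * Real.pi * Complex.I * (j + l : ℤ) * ((w : ℕ) / n : ℝ)) := by
      intro w
      rw [mul_left_comm, ← Complex.exp_add]
      congr 2
      push_cast
      ring
    simp_rw [this]
    rw [← Finset.mul_sum, orth n hn]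
    split_ifs
    · field_simp
    · simp
  rw [h2] at h1
  have inj : Function.Injective (fun k : ℤ => n * k - j) := by
    intro a b hab
    have : (n:ℤ) * a = n * b := by simpa using hab
    exact mul_left_cancel₀ (by exact_mod_cast hn.ne') this
  rw [← inj.hasSum_iff] at h1
  · convert h1 using 2 with k
    simp
  · intro l hl
    rw [if_neg]
    rintro ⟨q, hq⟩
    exact hl ⟨q, by simp only; omega⟩

lemma An_sub_Qf (n : ℕ) (hn : 0 < n) (t : ℝ) (ht : 0 ≤ t) (j : ℤ) (hj : 2 * |j| ≤ n)
    (K : ℕ) (hK : 0 < K) :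
    ‖An n t j - Qf t j‖ ≤
      2 * (2 * Real.exp 8 / √(1 + t)) * (K.factorial * (2 * √(1 + t) / n) ^ K) := by
  have hσ : 0 < √(1 + t) := by positivity
  have hnR : (0:ℝ) < n := by exact_mod_cast hn
  set σ := √(1 + t) with hσd
  set x : ℝ := n / (2 * σ) with hx
  have hx0 : 0 < x := by positivity
  set r := Real.exp (-x) with hr
  have r1 : r < 1 := by rw [hr, Real.exp_lt_one_iff]; linarith
  have hs := hasSum_geo_int r (Real.exp_pos _).le r1
  have h1 := fold_sum n hn t ht j
  have h2 : HasSum (fun k : ℤ => if k = 0 then 0 else Qf t (j - n * k)) (An n t j - Qf t j) := by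
    have := h1.sub (hasSum_ite_eq (0:ℤ) (Qf t j))
    have e : (fun k : ℤ => if k = 0 then 0 else Qf t (j - n * k)) =
        fun k : ℤ => Qf t (j - n * k) - if k = 0 then Qf t j else 0 := by
      funext k
      by_cases hk : k = 0 <;> simp [hk]
    rw [e]
    exact this
  have h3 := hs.mul_left (2 * Real.exp 8 / σ)
  have hb : ‖An n t j - Qf t j‖ ≤ 2 * Real.exp 8 / σ * (2 * (r / (1 - r))) := by
    rw [← h2.tsum_eq, ← h3.tsum_eq]
    refine tsum_of_norm_bounded h3.summable.hasSum ?_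
    intro k
    by_cases hk : k = 0
    · simp [hk]
    · simp only [hk, if_false]
      refine (Qf_bound t ht _).trans ?_
      gcongr
      rw [hr, ← Real.exp_nat_mul, Nat.cast_natAbs]
      apply Real.exp_le_exp.2
      have : (n:ℝ) * |k| / 2 ≤ |((j - n * k : ℤ) : ℝ)| := by
        have hk1 : 1 ≤ |k| := Int.one_le_abs hk
        have a1 : |(n:ℤ) * k| - |j| ≤ |j - n * k| := by
          rw [abs_sub_comm]; exact abs_sub_abs_le_abs_sub _ _
        rw [abs_mul, Nat.abs_cast] at a1
        have a2 : (n:ℤ) * |k| ≤ 2 * |j - n * k| := by nlinarith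
        have : ((n * |k| : ℤ):ℝ) ≤ ((2 * |j - n * k| : ℤ):ℝ) := by exact_mod_cast a2
        push_cast at this ⊢
        linarith
      rw [mul_neg, neg_le_neg_iff, hx, le_div_iff₀ hσ]
      refine le_trans (le_of_eq ?_) this
      push_cast
      field_simp
  have hr2 : r / (1 - r) ≤ K.factorial * (2 * σ / n) ^ K := by
    have e1 : x ^ K / K.factorial ≤ Real.exp x - 1 := by
      have := Real.sum_le_exp_of_nonneg hx0.le (K + 1)
      rw [Finset.sum_range_succ] at this
      have h0 : (1:ℝ) ≤ ∑ i ∈ Finset.range K, x ^ i / i.factorial := by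
        have := Finset.single_le_sum (f := fun i : ℕ => x ^ i / (i.factorial : ℝ))
          (fun i _ => by positivity) (Finset.mem_range.2 hK)
        simpa using this
      linarith
    have e2 : r / (1 - r) = 1 / (Real.exp x - 1) := by
      have : Real.exp x * r = 1 := by rw [hr, ← Real.exp_add]; simp
      have hp : 0 < Real.exp x - 1 := by
        have := Real.one_lt_exp_iff.2 hx0
        linarith
      rw [div_eq_div_iff (by linarith) hp.ne']
      linarith
    have hK0 : (0:ℝ) < K.factorial := by exact_mod_cast K.factorial_pos
    rw [e2]
    calc 1 / (Real.exp x - 1) ≤ 1 / (x ^ K / K.factorial) := by gcongr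
      _ = _ := by
        have : 2 * σ / n = x⁻¹ := by rw [hx, inv_div]
        rw [this, inv_pow]; field_simp
  calc _ ≤ _ := hb
    _ = 2 * (2 * Real.exp 8 / σ) * (r / (1 - r)) := by ring
    _ ≤ _ := by gcongr

lemma prod_diff {ι : Type*} (s : Finset ι) (A B : ι → ℂ) (M ε : ℝ) (hM : 0 ≤ M) (hε : 0 ≤ ε)
    (hA : ∀ i, ‖A i‖ ≤ M) (hB : ∀ i, ‖B i‖ ≤ M) (hd : ∀ i, ‖A i - B i‖ ≤ ε) :
    ‖∏ i ∈ s, A i - ∏ i ∈ s, B i‖ ≤ s.card * M ^ (s.card - 1) * ε := by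
  induction s using Finset.induction_on with
  | empty => simp
  | insert a s ha ih =>
    rw [Finset.prod_insert ha, Finset.prod_insert ha, Finset.card_insert_of_notMem ha]
    have hPA : ‖∏ i ∈ s, A i‖ ≤ M ^ s.card := by
      rw [norm_prod]
      refine (Finset.prod_le_prod (fun i _ => norm_nonneg _) (fun i _ => hA i)).trans_eq ?_
      rw [Finset.prod_const]
    have e : A a * ∏ i ∈ s, A i - B a * ∏ i ∈ s, B i =
      (A a - B a) * ∏ i ∈ s, A i + B a * (∏ i ∈ s, A i - ∏ i ∈ s, B i) := by ring
    rw [e]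
    refine (norm_add_le _ _).trans ?_
    rw [norm_mul, norm_mul]
    have h1 : ‖A a - B a‖ * ‖∏ i ∈ s, A i‖ ≤ ε * M ^ s.card :=
      mul_le_mul (hd a) hPA (norm_nonneg _) hε
    have h2 : ‖B a‖ * ‖∏ i ∈ s, A i - ∏ i ∈ s, B i‖ ≤ M * (s.card * M ^ (s.card - 1) * ε) :=
      mul_le_mul (hB a) ih (norm_nonneg _) hM
    have h3 : M * (s.card * M ^ (s.card - 1) * ε) = s.card * M ^ s.card * ε := by
      rcases Nat.eq_zero_or_pos s.card with h | h
      · simp [h]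
      · rw [← Nat.sub_add_cancel h, pow_succ]; simp; ring
    rw [h3] at h2
    simp only [Nat.add_sub_cancel]
    push_cast
    nlinarith

/-- Comparison of the product kernels for times up to `n²`. -/
lemma prod_kernel_diff (d : ℕ) (hd : 3 ≤ d) : ∃ C : ℝ, 0 < C ∧ ∀ n : ℕ, 0 < n → ∀ t : ℝ, 0 ≤ t →
    t ≤ (n:ℝ) ^ 2 → ∀ j : Fin d → ℤ, (∀ i, 2 * |j i| ≤ n) →
    ‖∏ i, An n t (j i) - ∏ i, Qf t (j i)‖ ≤ C / (n:ℝ) ^ d := by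
  set c0 : ℝ := 2 * Real.exp 8 with hc0
  have hc0p : 0 < c0 := by positivity
  set c1 : ℝ := 2 * c0 * d.factorial * 2 ^ d with hc1
  have hc1p : 0 < c1 := by positivity
  refine ⟨d * (c0 + c1 * 2 ^ d) ^ (d - 1) * c1, by positivity, ?_⟩
  intro n hn t ht htn j hj
  have hnR : (0:ℝ) < n := by exact_mod_cast hn
  have hn1 : (1:ℝ) ≤ n := by exact_mod_cast hn
  have hσ : 0 < √(1 + t) := by positivity
  have hσn : √(1 + t) ≤ 2 * n := by
    rw [Real.sqrt_le_left (by positivity)]; nlinarith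
  set σ := √(1 + t)
  set ε : ℝ := c1 * σ ^ (d - 1) / n ^ d with hε
  have hde : d = (d - 1) + 1 := by omega
  have hdiff : ∀ i, ‖An n t (j i) - Qf t (j i)‖ ≤ ε := by
    intro i
    refine (An_sub_Qf n hn t ht (j i) (hj i) d (by omega)).trans (le_of_eq ?_)
    rw [hε, hc1, hc0, div_pow, mul_pow]
    have : σ ^ d = σ ^ (d - 1) * σ := by rw [← pow_succ, ← hde]
    change 2 * (2 * Real.exp 8 / σ) * (d.factorial * (2 ^ d * σ ^ d / n ^ d)) = _
    rw [this]
    field_simp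
  have hQ : ∀ i, ‖Qf t (j i)‖ ≤ c0 / σ := by
    intro i
    refine (Qf_bound t ht (j i)).trans ?_
    apply mul_le_of_le_one_right (by positivity)
    rw [Real.exp_le_one_iff, neg_nonpos]
    positivity
  have hε2 : ε ≤ c1 * 2 ^ d / σ := by
    rw [hε, div_le_div_iff₀ (by positivity) hσ]
    calc c1 * σ ^ (d - 1) * σ = c1 * σ ^ d := by rw [mul_assoc c1, ← pow_succ, ← hde]
      _ ≤ c1 * (2 * n) ^ d := mul_le_mul_of_nonneg_left (pow_le_pow_left₀ hσ.le hσn d) hc1p.le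
      _ = c1 * 2 ^ d * n ^ d := by rw [mul_pow]; ring
  have hM1 : ∀ i, ‖Qf t (j i)‖ ≤ (c0 + c1 * 2 ^ d) / σ := by
    intro i; refine (hQ i).trans ?_
    gcongr
    have : 0 < c1 * 2 ^ d := by positivity
    linarith
  have hM2 : ∀ i, ‖An n t (j i)‖ ≤ (c0 + c1 * 2 ^ d) / σ := by
    intro i
    have e : An n t (j i) = Qf t (j i) + (An n t (j i) - Qf t (j i)) := by ring
    rw [e]
    refine (norm_add_le _ _).trans ?_
    rw [add_div]
    exact add_le_add (hQ i) ((hdiff i).trans hε2)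
  have := prod_diff Finset.univ (fun i => An n t (j i)) (fun i => Qf t (j i))
    ((c0 + c1 * 2 ^ d) / σ) ε (by positivity) (by positivity) hM2 hM1 hdiff
  refine this.trans (le_of_eq ?_)
  simp only [Finset.card_univ, Fintype.card_fin]
  rw [hε, div_pow]
  field_simp

lemma cube_prod {𝕜 : Type*} [RCLike 𝕜] (d : ℕ) (f : Fin d → ℝ → 𝕜) :
    ∫ s in Set.Icc (0 : Fin d → ℝ) 1, ∏ i, f i (s i) = ∏ i, ∫ x in (0:ℝ)..1, f i x := by
  have h : Set.Icc (0 : Fin d → ℝ) 1 = Set.univ.pi (fun _ => Set.Icc (0:ℝ) 1) := by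
    rw [← Set.pi_univ_Icc]; rfl
  rw [h, volume_pi, Measure.restrict_pi_pi, integral_fintype_prod_eq_prod]
  congr 1
  ext i
  rw [intervalIntegral.integral_of_le zero_le_one, integral_Icc_eq_integral_Ioc]

/-- The `d`-dimensional symbol. -/
def etaR (d : ℕ) (s : Fin d → ℝ) : ℝ := 2 * ∑ i, (1 - Real.cos (2 * Real.pi * s i))

lemma etaR_nonneg (d : ℕ) (s : Fin d → ℝ) : 0 ≤ etaR d s := by
  unfold etaR
  have : 0 ≤ ∑ i, (1 - Real.cos (2 * Real.pi * s i)) :=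
    Finset.sum_nonneg fun i _ => sub_nonneg.2 (Real.cos_le_one _)
  positivity

lemma exp_etaR (d : ℕ) (t : ℝ) (s : Fin d → ℝ) :
    Real.exp (-(t * etaR d s)) = ∏ i, gk t (s i) := by
  unfold gk etaR
  rw [← Real.exp_sum]
  congr 1
  rw [Finset.sum_neg_distrib, ← Finset.mul_sum, ← Finset.mul_sum]

lemma phase_prod (d : ℕ) (t : ℝ) (j : Fin d → ℤ) (s : Fin d → ℝ) :
    (∏ i, Complex.exp (2 * Real.pi * Complex.I * (j i) * (s i)) * (gk t (s i) : ℂ)) =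
     Complex.exp ((2 * Real.pi * ∑ i, (j i : ℝ) * s i : ℝ) * Complex.I) *
      (Real.exp (-(t * etaR d s)) : ℝ) := by
  rw [Finset.prod_mul_distrib, exp_etaR, ← Complex.exp_sum]
  push_cast
  congr 2
  rw [Finset.mul_sum, Finset.sum_mul]
  refine Finset.sum_congr rfl fun i _ => ?_
  ring

lemma phase_re (θ a : ℝ) : (Complex.exp (θ * Complex.I) * (a : ℂ)).re = Real.cos θ * a := by
  rw [Complex.re_mul_ofReal, Complex.exp_ofReal_mul_I_re]

lemma etaR_cont (d : ℕ) : Continuous (etaR d) := by unfold etaR; fun_prop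

lemma pZ_eq (d : ℕ) (t : ℝ) (j : Fin d → ℤ) :
    ∫ s in Set.Icc (0 : Fin d → ℝ) 1,
      Real.cos (2 * Real.pi * ∑ i, (j i : ℝ) * s i) * Real.exp (-(t * etaR d s)) =
      (∏ i, Qf t (j i)).re := by
  have := cube_prod d (fun i x => Complex.exp (2 * Real.pi * Complex.I * (j i) * x) * (gk t x : ℂ))
  unfold Qf
  rw [← this]
  simp_rw [phase_prod]
  rw [← RCLike.re_eq_complex_re, ← integral_re]
  · simp_rw [RCLike.re_eq_complex_re, phase_re]
  · apply Continuous.integrableOn_Icc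
    have := etaR_cont d
    fun_prop

lemma gk_pos (t s : ℝ) : 0 < gk t s := Real.exp_pos _

lemma exp_cube_le (d : ℕ) (t : ℝ) (ht : 0 ≤ t) :
    ∫ s in Set.Icc (0 : Fin d → ℝ) 1, Real.exp (-(t * etaR d s)) ≤
      (2 * Real.exp 8) ^ d * (1 + t) ^ (-(d:ℝ) / 2) := by
  simp_rw [exp_etaR]
  rw [cube_prod d (fun _ => gk t)]
  have e : (2 * Real.exp 8) ^ d * (1 + t) ^ (-(d:ℝ) / 2) = ∏ i : Fin d, (2 * Real.exp 8 / √(1 + t)) := by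
    rw [Finset.prod_const, Finset.card_univ, Fintype.card_fin, div_pow, Real.sqrt_eq_rpow,
      ← Real.rpow_natCast ((1 + t) ^ (1 / 2 : ℝ)), ← Real.rpow_mul (by positivity), div_eq_mul_inv ((2 * Real.exp 8) ^ d),
      ← Real.rpow_neg (by positivity)]
    congr 2
    ring
  rw [e]
  apply Finset.prod_le_prod
  · intro i _
    exact intervalIntegral.integral_nonneg zero_le_one fun x _ => (gk_pos t x).le
  · intro i _
    refine (gk_int_le t ht).trans ?_
    gcongr
    norm_num

lemma pZ_bound (d : ℕ) (t : ℝ) (ht : 0 ≤ t) (j : Fin d → ℤ) :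
    |(∏ i, Qf t (j i)).re| ≤ (2 * Real.exp 8) ^ d * (1 + t) ^ (-(d:ℝ) / 2) := by
  rw [← pZ_eq]
  refine le_trans ?_ (exp_cube_le d t ht)
  have hc := etaR_cont d
  rw [← Real.norm_eq_abs]
  apply norm_integral_le_of_norm_le
  · apply Continuous.integrableOn_Icc
    fun_prop
  · filter_upwards with s
    rw [norm_mul, Real.norm_eq_abs, Real.norm_eq_abs, abs_of_pos (Real.exp_pos _)]
    exact mul_le_of_le_one_left (Real.exp_pos _).le (Real.abs_cos_le_one _)

lemma bound_integrable (d : ℕ) (hd : 3 ≤ d) :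
    IntegrableOn (fun t : ℝ => (2 * Real.exp 8) ^ d * (1 + t) ^ (-(d:ℝ) / 2)) (Set.Ioi 0) := by
  apply Integrable.const_mul
  have : (3:ℝ) ≤ d := by exact_mod_cast hd
  have := integrableOn_add_rpow_Ioi_of_lt (a := -(d:ℝ) / 2) (c := 0) (m := 1) (by linarith) (by norm_num)
  simpa [add_comm, IntegrableOn] using this

lemma Phi_integrable (d : ℕ) (hd : 3 ≤ d) (j : Fin d → ℤ) :
    Integrable (fun q : (Fin d → ℝ) × ℝ =>
      Real.cos (2 * Real.pi * ∑ i, (j i : ℝ) * q.1 i) * Real.exp (-(q.2 * etaR d q.1)))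
      ((volume.restrict (Set.Icc (0 : Fin d → ℝ) 1)).prod (volume.restrict (Set.Ioi (0:ℝ)))) := by
  have hc := etaR_cont d
  have hm : Continuous (fun q : (Fin d → ℝ) × ℝ =>
      Real.cos (2 * Real.pi * ∑ i, (j i : ℝ) * q.1 i) * Real.exp (-(q.2 * etaR d q.1))) := by
    fun_prop
  rw [integrable_prod_iff' hm.aestronglyMeasurable]
  constructor
  · filter_upwards with t
    change IntegrableOn _ _ _
    apply Continuous.integrableOn_Icc
    fun_prop
  · refine Integrable.mono' (bound_integrable d hd) ?_ ?_
    · exact hm.aestronglyMeasurable.norm.prod_swap.integral_prod_right'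
    · filter_upwards [ae_restrict_mem measurableSet_Ioi] with t ht
      rw [Real.norm_eq_abs, abs_of_nonneg (integral_nonneg fun s => norm_nonneg _)]
      refine le_trans ?_ (exp_cube_le d t (le_of_lt ht))
      apply integral_mono
      · apply Continuous.integrableOn_Icc
        fun_prop
      · apply Continuous.integrableOn_Icc
        fun_prop
      · intro s
        simp only
        rw [norm_mul, Real.norm_eq_abs, Real.norm_eq_abs, abs_of_pos (Real.exp_pos _)]
        exact mul_le_of_le_one_left (Real.exp_pos _).le (Real.abs_cos_le_one _)

lemma inner_int (c η : ℝ) (hη : 0 ≤ η) :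
    ∫ t in Set.Ioi (0:ℝ), c * Real.exp (-(t * η)) = c / η := by
  rw [integral_const_mul]
  rcases hη.eq_or_lt with h | h
  · rw [← h]; simp [Measure.real]
  · have := integral_exp_mul_Ioi (a := -η) (by linarith) 0
    have e : (fun t : ℝ => Real.exp (-(t * η))) = fun t => Real.exp (-η * t) := by
      ext t; congr 1; ring
    rw [e, this]
    simp [div_eq_mul_inv]

lemma greenZ_eq (d : ℕ) (hd : 3 ≤ d) (y : Fin d → ℤ) :
    greenZ d 0 y = ∫ t in Set.Ioi (0:ℝ), (∏ i, Qf t (-(y i))).re := by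
  have hI := Phi_integrable d hd (fun i => -(y i))
  have hsw := integral_integral_swap (f := fun (s : Fin d → ℝ) (t : ℝ) =>
    Real.cos (2 * Real.pi * ∑ i, ((-(y i) : ℤ) : ℝ) * s i) * Real.exp (-(t * etaR d s))) hI
  have e1 : ∀ t : ℝ, (∏ i, Qf t (-(y i))).re = _ := fun t => (pZ_eq d t (fun i => -(y i))).symm
  simp_rw [e1]
  rw [← hsw]
  simp_rw [inner_int _ _ (etaR_nonneg d _)]
  unfold greenZ massGreenZ etaR
  simp

lemma pZ_integrable (d : ℕ) (hd : 3 ≤ d) (y : Fin d → ℤ) :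
    IntegrableOn (fun t : ℝ => (∏ i, Qf t (-(y i))).re) (Set.Ioi (0:ℝ)) := by
  have := (Phi_integrable d hd (fun i => -(y i))).integral_prod_right
  have e1 : ∀ t : ℝ, (∏ i, Qf t (-(y i))).re = _ := fun t => (pZ_eq d t (fun i => -(y i))).symm
  simp_rw [e1]
  exact this

lemma pZ_tail (d : ℕ) (hd : 3 ≤ d) (y : Fin d → ℤ) (n : ℕ) (hn : 0 < n) :
    |∫ t in Set.Ioi ((n:ℝ) ^ 2), (∏ i, Qf t (-(y i))).re| ≤
      2 * (2 * Real.exp 8) ^ d * (n:ℝ) ^ ((2:ℝ) - d) := by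
  have hnR : (0:ℝ) < n := by exact_mod_cast hn
  have hd3 : (3:ℝ) ≤ d := by exact_mod_cast hd
  have hT : (0:ℝ) < (n:ℝ) ^ 2 := by positivity
  rw [← Real.norm_eq_abs]
  have hlt : -(d:ℝ) / 2 < -1 := by linarith
  have hi : IntegrableOn (fun t : ℝ => (2 * Real.exp 8) ^ d * t ^ (-(d:ℝ) / 2)) (Set.Ioi ((n:ℝ) ^ 2)) :=
    (integrableOn_Ioi_rpow_of_lt hlt hT).const_mul _
  refine (norm_integral_le_of_norm_le hi ?_).trans ?_
  · filter_upwards [ae_restrict_mem measurableSet_Ioi] with t ht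
    have ht0 : 0 < t := hT.trans ht
    refine (pZ_bound d t ht0.le _).trans ?_
    gcongr 1
    exact Real.rpow_le_rpow_of_nonpos ht0 (by linarith) (by linarith)
  · rw [integral_const_mul, integral_Ioi_rpow_of_lt hlt hT]
    have e : ((n:ℝ) ^ 2) ^ (-(d:ℝ) / 2 + 1) = (n:ℝ) ^ ((2:ℝ) - d) := by
      rw [← Real.rpow_natCast, ← Real.rpow_mul hnR.le]
      congr 1
      push_cast; ring
    rw [e, neg_div, ← div_neg]
    have hX : 0 < (n:ℝ) ^ ((2:ℝ) - d) := by positivity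
    have : (n:ℝ) ^ ((2:ℝ) - d) / -(-(d:ℝ) / 2 + 1) ≤ 2 * (n:ℝ) ^ ((2:ℝ) - d) := by
      rw [div_le_iff₀ (by linarith)]
      nlinarith
    calc _ ≤ (2 * Real.exp 8) ^ d * (2 * (n:ℝ) ^ ((2:ℝ) - d)) := by gcongr
      _ = _ := by ring

/-- The cosine factor in the torus Green's function. -/
def cw (d n : ℕ) (y : Fin d → ℤ) (w : Fin d → Fin n) : ℝ :=
  Real.cos (2 * Real.pi * (∑ i, ((w i : ℕ) : ℝ) * (((0 : ZMod n) - (y i : ZMod n)).val : ℝ)) / n)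

lemma eta_eq (d n : ℕ) (w : Fin d → Fin n) :
    eta d n w = etaR d (fun i => ((w i : ℕ) / n : ℝ)) := by
  unfold eta etaR
  simp_rw [mul_div_assoc]

lemma cw_eq (d n : ℕ) (hn : 0 < n) (y : Fin d → ℤ) (w : Fin d → Fin n) :
    cw d n y w = Real.cos (2 * Real.pi * ∑ i, ((-(y i) : ℤ) : ℝ) * ((w i : ℕ) / n : ℝ)) := by
  have : NeZero n := ⟨hn.ne'⟩
  have hnR : (n:ℝ) ≠ 0 := by exact_mod_cast hn.ne'
  have h : ∀ i, ∃ q : ℤ, ((((0 : ZMod n) - (y i : ZMod n)).val : ℕ) : ℤ) = -(y i) + n * q := by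
    intro i
    have : (((((0 : ZMod n) - (y i : ZMod n)).val : ℕ) : ℤ) : ZMod n) = ((-(y i) : ℤ) : ZMod n) := by
      push_cast
      rw [ZMod.natCast_zmod_val]; simp
    rw [ZMod.intCast_eq_intCast_iff_dvd_sub] at this
    obtain ⟨q, hq⟩ := this
    exact ⟨-q, by linarith⟩
  choose q hq using h
  unfold cw
  have hq' : ∀ i, ((((0 : ZMod n) - (y i : ZMod n)).val : ℕ) : ℝ) = ((-(y i) : ℤ) : ℝ) + n * (q i : ℝ) := by
    intro i
    exact_mod_cast hq i
  have : 2 * Real.pi * (∑ i, ((w i : ℕ) : ℝ) * (((0 : ZMod n) - (y i : ZMod n)).val : ℝ)) / n =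
      2 * Real.pi * ∑ i, ((-(y i) : ℤ) : ℝ) * ((w i : ℕ) / n : ℝ) +
        ((∑ i, ((w i : ℕ) : ℤ) * q i : ℤ) : ℝ) * (2 * Real.pi) := by
    simp_rw [hq']
    push_cast
    rw [mul_div_assoc, mul_comm _ (2 * Real.pi), ← mul_add, Finset.sum_div, ← Finset.sum_add_distrib]
    congr 1
    refine Finset.sum_congr rfl fun i _ => ?_
    field_simp
  rw [this, Real.cos_add_int_mul_two_pi]

lemma heat_eq (d n : ℕ) (hn : 0 < n) (t : ℝ) (y : Fin d → ℤ) :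
    (1 / (n:ℝ) ^ d) * ∑ w : Fin d → Fin n, cw d n y w * Real.exp (-(t * eta d n w)) =
      (∏ i, An n t (-(y i))).re := by
  unfold An
  rw [Finset.prod_mul_distrib, Finset.prod_const, Finset.card_univ, Fintype.card_fin,
    Finset.prod_univ_sum, Fintype.piFinset_univ]
  simp_rw [phase_prod d t (fun i => -(y i)) (fun i => _)]
  have e : ((1 / (n:ℂ)) ^ d) = ((1 / (n:ℝ) ^ d : ℝ) : ℂ) := by push_cast; rw [_root_.one_div_pow]
  rw [e, Complex.re_ofReal_mul, Complex.re_sum]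
  congr 1
  refine Finset.sum_congr rfl fun w _ => ?_
  rw [phase_re, cw_eq d n hn, eta_eq]

lemma eta_lower (d n : ℕ) (hn : 0 < n) (w : Fin d → Fin n) (hw : ∃ i, (w i : ℕ) ≠ 0) :
    1 / (n:ℝ) ^ 2 ≤ eta d n w := by
  have hnR : (0:ℝ) < n := by exact_mod_cast hn
  obtain ⟨i, hi⟩ := hw
  have h1 : (1:ℝ) ≤ ((w i : ℕ) : ℝ) := by exact_mod_cast Nat.one_le_iff_ne_zero.2 hi
  have h2 : ((w i : ℕ) : ℝ) + 1 ≤ n := by exact_mod_cast (w i).2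
  have h := one_sub_cos_ge ((w i : ℕ) / n : ℝ) (by positivity) (by rw [div_le_one hnR]; linarith)
  have hm : 1 / (n:ℝ) ≤ min ((w i : ℕ) / n : ℝ) (1 - (w i : ℕ) / n) := by
    apply le_min
    · gcongr
    · rw [div_le_iff₀ hnR, sub_mul, div_mul_cancel₀ _ hnR.ne']; linarith
  have hm2 : (1 / (n:ℝ)) ^ 2 ≤ (min ((w i : ℕ) / n : ℝ) (1 - (w i : ℕ) / n)) ^ 2 := by
    gcongr
  rw [eta_eq]
  unfold etaR
  have hs := Finset.single_le_sum (f := fun i : Fin d => 1 - Real.cos (2 * Real.pi * ((w i : ℕ) / n : ℝ)))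
    (fun i _ => sub_nonneg.2 (Real.cos_le_one _)) (Finset.mem_univ i)
  rw [_root_.one_div_pow] at hm2
  have : 0 < 1 / (n:ℝ) ^ 2 := by positivity
  linarith

lemma exp_split (c η T : ℝ) (hη : 0 < η) :
    c / η = (∫ t in (0:ℝ)..T, c * Real.exp (-(t * η))) + c * Real.exp (-(T * η)) / η := by
  have e : (fun t : ℝ => c * Real.exp (-(t * η))) = fun t => c * Real.exp ((-η) * t) := by
    ext t; congr 2; ring
  rw [e, intervalIntegral.integral_const_mul, intervalIntegral.integral_comp_mul_left
    (fun x => Real.exp x) (neg_ne_zero.2 hη.ne'), integral_exp]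
  rw [mul_zero, Real.exp_zero, smul_eq_mul, show -η * T = -(T * η) by ring]
  field_simp
  ring

lemma sum_filter_eq (d n : ℕ) (hn : 0 < n) (f : (Fin d → Fin n) → ℝ) :
    ∑ w ∈ Finset.univ.filter (fun w : Fin d → Fin n => ∃ i, (w i : ℕ) ≠ 0), f w =
      ∑ w, f w - f (fun _ => ⟨0, hn⟩) := by
  rw [← Finset.sum_filter_add_sum_filter_not Finset.univ
    (fun w : Fin d → Fin n => ∃ i, (w i : ℕ) ≠ 0) f]
  have : Finset.univ.filter (fun w : Fin d → Fin n => ¬ ∃ i, (w i : ℕ) ≠ 0) =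
      {fun _ => ⟨0, hn⟩} := by
    ext w
    simp only [Finset.mem_filter, Finset.mem_univ, true_and, Finset.mem_singleton, not_exists,
      not_not]
    constructor
    · intro h; ext i; exact h i
    · rintro rfl i; rfl
  rw [this, Finset.sum_singleton]; ring

lemma torus_split (d n : ℕ) (hn : 0 < n) (y : Fin d → ℤ) (T : ℝ) :
    torusGreen0 d n (fun _ => 0) (fun i => (y i : ZMod n)) =
      (∫ t in (0:ℝ)..T, ((∏ i, An n t (-(y i))).re - 1 / (n:ℝ) ^ d)) +
      (1 / (n:ℝ) ^ d) * ∑ w ∈ Finset.univ.filter (fun w : Fin d → Fin n => ∃ i, (w i : ℕ) ≠ 0),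
        cw d n y w * Real.exp (-(T * eta d n w)) / eta d n w := by
  have hnR : (0:ℝ) < n := by exact_mod_cast hn
  have e : ∀ t : ℝ, (∏ i, An n t (-(y i))).re - 1 / (n:ℝ) ^ d =
      (1 / (n:ℝ) ^ d) * ∑ w ∈ Finset.univ.filter (fun w : Fin d → Fin n => ∃ i, (w i : ℕ) ≠ 0),
        cw d n y w * Real.exp (-(t * eta d n w)) := by
    intro t
    rw [sum_filter_eq d n hn, ← heat_eq d n hn t y]
    have : cw d n y (fun _ => ⟨0, hn⟩) * Real.exp (-(t * eta d n (fun _ => ⟨0, hn⟩))) = 1 := by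
      simp [cw, eta]
    rw [this]; ring
  simp_rw [e]
  rw [intervalIntegral.integral_const_mul, intervalIntegral.integral_finsetSum, ← mul_add,
    ← Finset.sum_add_distrib]
  · unfold torusGreen0
    congr 1
    refine Finset.sum_congr rfl fun w hw => ?_
    have hη : 0 < eta d n w :=
      lt_of_lt_of_le (by positivity) (eta_lower d n hn w (Finset.mem_filter.1 hw).2)
    rw [← exp_split _ _ _ hη]
    rfl
  · intro w _
    apply Continuous.intervalIntegrable
    fun_prop

lemma prodQ_norm (d : ℕ) (n : ℕ) (hn : 0 < n) :
    ‖∏ _i : Fin d, Qf ((n:ℝ) ^ 2) 0‖ ≤ (2 * Real.exp 8) ^ d / (n:ℝ) ^ d := by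
  have hnR : (0:ℝ) < n := by exact_mod_cast hn
  rw [Finset.prod_const, Finset.card_univ, Fintype.card_fin, norm_pow, ← div_pow]
  apply pow_le_pow_left₀ (norm_nonneg _)
  refine (Qf_bound _ (by positivity) 0).trans ?_
  simp only [Int.cast_zero, abs_zero, zero_div, neg_zero, Real.exp_zero, mul_one]
  gcongr
  apply Real.le_sqrt_of_sq_le
  linarith

lemma torus_rem (d : ℕ) (hd : 3 ≤ d) : ∃ C : ℝ, 0 < C ∧ ∀ n : ℕ, 0 < n → ∀ y : Fin d → ℤ,
    |(1 / (n:ℝ) ^ d) * ∑ w ∈ Finset.univ.filter (fun w : Fin d → Fin n => ∃ i, (w i : ℕ) ≠ 0),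
        cw d n y w * Real.exp (-((n:ℝ) ^ 2 * eta d n w)) / eta d n w| ≤ C * ((n:ℝ) ^ 2 / (n:ℝ) ^ d) := by
  obtain ⟨C, hC, hCb⟩ := prod_kernel_diff d hd
  refine ⟨C + (2 * Real.exp 8) ^ d, by positivity, ?_⟩
  intro n hn y
  have hnR : (0:ℝ) < n := by exact_mod_cast hn
  have hk := hCb n hn ((n:ℝ) ^ 2) (by positivity) le_rfl (fun _ => 0) (by simp)
  have hA : (∏ _i : Fin d, An n ((n:ℝ) ^ 2) 0).re ≤ (C + (2 * Real.exp 8) ^ d) / (n:ℝ) ^ d := by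
    refine (Complex.re_le_norm _).trans ?_
    have := norm_add_le (∏ _i : Fin d, An n ((n:ℝ) ^ 2) 0 - ∏ _i : Fin d, Qf ((n:ℝ) ^ 2) 0)
      (∏ _i : Fin d, Qf ((n:ℝ) ^ 2) 0)
    rw [sub_add_cancel] at this
    rw [add_div]
    exact this.trans (add_le_add hk (prodQ_norm d n hn))
  have hh := heat_eq d n hn ((n:ℝ) ^ 2) 0
  simp only [Pi.zero_apply, neg_zero] at hh
  rw [← hh] at hA
  have hcw : ∀ w, cw d n 0 w = 1 := by
    intro w; simp [cw]
  simp_rw [hcw, one_mul] at hA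
  rw [abs_mul, abs_of_pos (by positivity : 0 < 1 / (n:ℝ) ^ d)]
  have hsum : |∑ w ∈ Finset.univ.filter (fun w : Fin d → Fin n => ∃ i, (w i : ℕ) ≠ 0),
        cw d n y w * Real.exp (-((n:ℝ) ^ 2 * eta d n w)) / eta d n w| ≤
      (n:ℝ) ^ 2 * ∑ w : Fin d → Fin n, Real.exp (-((n:ℝ) ^ 2 * eta d n w)) := by
    refine (Finset.abs_sum_le_sum_abs _ _).trans ?_
    rw [Finset.mul_sum]
    refine le_trans (Finset.sum_le_sum (g := fun w => (n:ℝ) ^ 2 * Real.exp (-((n:ℝ) ^ 2 * eta d n w))) ?_)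
      (Finset.sum_le_sum_of_subset_of_nonneg (Finset.filter_subset _ _) fun w _ _ => by positivity)
    intro w hw
    have hl := eta_lower d n hn w (Finset.mem_filter.1 hw).2
    have hη : 0 < eta d n w := lt_of_lt_of_le (by positivity) hl
    rw [abs_div, abs_mul, abs_of_pos (Real.exp_pos _), abs_of_pos hη, div_le_iff₀ hη]
    have h1 : 1 ≤ (n:ℝ) ^ 2 * eta d n w := by
      rw [div_le_iff₀ (by positivity)] at hl; linarith
    have h2 : |cw d n y w| ≤ 1 := Real.abs_cos_le_one _
    have h3 := Real.exp_pos (-((n:ℝ) ^ 2 * eta d n w))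
    nlinarith
  calc _ ≤ 1 / (n:ℝ) ^ d * ((n:ℝ) ^ 2 * ∑ w : Fin d → Fin n, Real.exp (-((n:ℝ) ^ 2 * eta d n w))) := by
        gcongr
    _ = (n:ℝ) ^ 2 * (1 / (n:ℝ) ^ d * ∑ w : Fin d → Fin n, Real.exp (-((n:ℝ) ^ 2 * eta d n w))) := by ring
    _ ≤ (n:ℝ) ^ 2 * ((C + (2 * Real.exp 8) ^ d) / (n:ℝ) ^ d) := by gcongr
    _ = _ := by ring

lemma An_cont (d n : ℕ) (hn : 0 < n) (y : Fin d → ℤ) :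
    Continuous (fun t : ℝ => (∏ i, An n t (-(y i))).re) := by
  simp_rw [← heat_eq d n hn _ y]
  fun_prop

/-- Refined comparison of the zero-average Green's function on the torus
with the lattice Green's function: for `d ≥ 3` there are `C > 0` and `n₀` such that for all
`n ≥ n₀` and all `y ∈ [−n/2, n/2)^d ∩ ℤ^d`,
`|G_n^0(0, ȳ) − G_{ℤ^d}(0, y)| ≤ C n^{2−d}`. -/
theorem zero_average_green_refined_estimate (d : ℕ) (hd : 3 ≤ d) :
    ∃ C : ℝ, 0 < C ∧ ∃ n0 : ℕ, ∀ n : ℕ, n0 ≤ n →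
      ∀ y : Fin d → ℤ,
        (∀ i, -(n : ℝ) / 2 ≤ (y i : ℝ) ∧ (y i : ℝ) < (n : ℝ) / 2) →
        |torusGreen0 d n (fun _ => 0) (fun i => (y i : ZMod n)) - greenZ d 0 y|
          ≤ C * (n : ℝ) ^ ((2 : ℝ) - d) := by
  obtain ⟨C1, hC1, hb1⟩ := prod_kernel_diff d hd
  obtain ⟨C2, hC2, hb2⟩ := torus_rem d hd
  refine ⟨(C1 + 1) + C2 + 2 * (2 * Real.exp 8) ^ d, by positivity, 1, ?_⟩
  intro n hn y hy
  have hnR : (0:ℝ) < n := by exact_mod_cast hn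
  have hj : ∀ i, 2 * |(-(y i))| ≤ (n:ℤ) := by
    intro i
    obtain ⟨h1, h2⟩ := hy i
    have : ((2 * |(-(y i))| : ℤ) : ℝ) ≤ ((n:ℤ) : ℝ) := by
      push_cast
      rw [abs_neg]
      have : |(y i : ℝ)| ≤ n / 2 := abs_le.2 ⟨by linarith, h2.le⟩
      linarith
    exact_mod_cast this
  have hX : (n:ℝ) ^ ((2:ℝ) - d) = (n:ℝ) ^ 2 / (n:ℝ) ^ d := by
    rw [Real.rpow_sub hnR, Real.rpow_natCast, Real.rpow_two]
  have hT : (0:ℝ) ≤ (n:ℝ) ^ 2 := by positivity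
  have hpi := pZ_integrable d hd y
  have hpiT : IntervalIntegrable (fun t : ℝ => (∏ i, Qf t (-(y i))).re) volume 0 ((n:ℝ) ^ 2) := by
    rw [intervalIntegrable_iff_integrableOn_Ioc_of_le hT]
    exact hpi.mono_set Set.Ioc_subset_Ioi_self
  have hG : greenZ d 0 y = (∫ t in (0:ℝ)..(n:ℝ) ^ 2, (∏ i, Qf t (-(y i))).re) +
      ∫ t in Set.Ioi ((n:ℝ) ^ 2), (∏ i, Qf t (-(y i))).re := by
    rw [greenZ_eq d hd, intervalIntegral.integral_of_le hT, ← setIntegral_union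
      (Set.Ioc_disjoint_Ioi le_rfl) measurableSet_Ioi (hpi.mono_set Set.Ioc_subset_Ioi_self)
      (hpi.mono_set (Set.Ioi_subset_Ioi hT)), Set.Ioc_union_Ioi_eq_Ioi hT]
  rw [torus_split d n hn y ((n:ℝ) ^ 2), hG]
  have hcA : IntervalIntegrable (fun t : ℝ => (∏ i, An n t (-(y i))).re - 1 / (n:ℝ) ^ d) volume 0
      ((n:ℝ) ^ 2) := ((An_cont d n hn y).sub continuous_const).intervalIntegrable _ _
  have hmain : |(∫ t in (0:ℝ)..(n:ℝ) ^ 2, ((∏ i, An n t (-(y i))).re - 1 / (n:ℝ) ^ d)) -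
      ∫ t in (0:ℝ)..(n:ℝ) ^ 2, (∏ i, Qf t (-(y i))).re| ≤ (C1 + 1) * ((n:ℝ) ^ 2 / (n:ℝ) ^ d) := by
    rw [← intervalIntegral.integral_sub hcA hpiT, ← Real.norm_eq_abs]
    refine (intervalIntegral.norm_integral_le_of_norm_le_const (C := (C1 + 1) / (n:ℝ) ^ d) ?_).trans ?_
    · intro t ht
      rw [Set.uIoc_of_le hT] at ht
      have h1 := hb1 n hn t ht.1.le ht.2 (fun i => -(y i)) hj
      have h2 := (Complex.abs_re_le_norm _).trans h1
      rw [Complex.sub_re] at h2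
      have h3 : 0 < 1 / (n:ℝ) ^ d := by positivity
      rw [Real.norm_eq_abs, add_div]
      rw [abs_le] at h2 ⊢
      constructor <;> linarith [h2.1, h2.2]
    · rw [sub_zero, abs_of_nonneg hT]
      apply le_of_eq; ring
  have ht := pZ_tail d hd y n hn
  have hr := hb2 n hn y
  rw [hX] at ht ⊢
  rw [abs_le] at hmain ht hr ⊢
  constructor <;> linarith [hmain.1, hmain.2, ht.1, ht.2, hr.1, hr.2]

end
end

section
/- Let d = 3. There exist constants c, C > 0 and n_0 ∈ ℕ such that for all n ≥ n_0, −C/n ≤ G_n^0(0,0) − G_{ℤ³}(0,0) ≤ −c/n, where G_n^0(0,0) = n^{−3} Σ_{w ∈ {0,…,n−1}³, w ≠ 0} 1/η_w; in particular G_n^0(x,x) − G_{ℤ³}(0,0) is negative and of order Θ(n^{−1}) uniformly for large n (note G_n^0(x,x) = G_n^0(0,0) for every x ∈ T_n³). -/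
open MeasureTheory ProbabilityTheory Filter Topology Matrix
open scoped Classical ENNReal

noncomputable section

def ksum (N : ℕ) : ℝ := ∑ p ∈ (Finset.Icc (-(N:ℤ)) N) ×ˢ (Finset.Icc (-(N:ℤ)) N) ×ˢ (Finset.Icc (-(N:ℤ)) N),
   1 / (((p.1^2 + p.2.1^2 + p.2.2^2 : ℤ) : ℝ))^2

lemma ksum_two : ksum 2 ≤ 1244/100 := by
  have : Finset.Icc (-((2:ℕ):ℤ)) ((2:ℕ):ℤ) = {-2,-1,0,1,2} := by decide
  unfold ksum
  rw [this]
  simp only [Finset.sum_product]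
  norm_num

lemma ksum_succ (N : ℕ) (hN : 2 ≤ N) : ksum (N+1) ≤ ksum N + (24/((N:ℝ)+1/2) - 24/((N:ℝ)+1+1/2)) := by
  set B : ℕ → Finset (ℤ × ℤ × ℤ) := fun N => (Finset.Icc (-(N:ℤ)) N) ×ˢ (Finset.Icc (-(N:ℤ)) N) ×ˢ (Finset.Icc (-(N:ℤ)) N) with hB
  have hsub : B N ⊆ B (N+1) := by
    intro p hp
    simp only [hB, Finset.mem_product, Finset.mem_Icc] at hp ⊢
    push_cast
    omega
  have hcard : ∀ N : ℕ, (B N).card = (2*N+1)^3 := by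
    intro N
    simp only [hB, Finset.card_product, Int.card_Icc]
    have : ((N:ℤ) + 1 - -(N:ℤ)).toNat = 2*N+1 := by omega
    rw [this]; ring
  have h1 : ksum (N+1) = ∑ p ∈ B (N+1) \ B N, 1 / (((p.1^2 + p.2.1^2 + p.2.2^2 : ℤ) : ℝ))^2 + ksum N := by
    unfold ksum
    exact (Finset.sum_sdiff hsub).symm
  have h2 : ∑ p ∈ B (N+1) \ B N, 1 / (((p.1^2 + p.2.1^2 + p.2.2^2 : ℤ) : ℝ))^2 ≤ (B (N+1) \ B N).card • (1/((N:ℝ)+1)^4) := by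
    apply Finset.sum_le_card_nsmul
    intro p hp
    have hz : ((N:ℤ)+1)^2 ≤ p.1^2 + p.2.1^2 + p.2.2^2 := by
      simp only [hB, Finset.mem_sdiff, Finset.mem_product, Finset.mem_Icc] at hp
      have : (N:ℤ)+1 ≤ |p.1| ∨ (N:ℤ)+1 ≤ |p.2.1| ∨ (N:ℤ)+1 ≤ |p.2.2| := by
        simp only [le_abs]
        omega
      have h0 : (0:ℤ) ≤ (N:ℤ)+1 := by positivity
      rcases this with h | h | h
      · have := pow_le_pow_left₀ h0 h 2
        rw [sq_abs] at this
        nlinarith [sq_nonneg p.2.1, sq_nonneg p.2.2]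
      · have := pow_le_pow_left₀ h0 h 2
        rw [sq_abs] at this
        nlinarith [sq_nonneg p.1, sq_nonneg p.2.2]
      · have := pow_le_pow_left₀ h0 h 2
        rw [sq_abs] at this
        nlinarith [sq_nonneg p.2.1, sq_nonneg p.1]
    have hr : ((N:ℝ)+1)^2 ≤ ((p.1^2 + p.2.1^2 + p.2.2^2 : ℤ) : ℝ) := by exact_mod_cast hz
    have : ((N:ℝ)+1)^4 = (((N:ℝ)+1)^2)^2 := by ring
    rw [this]
    gcongr
  have h3 : ((B (N+1) \ B N).card : ℝ) = 24*((N:ℝ)+1)^2+2 := by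
    have := Finset.card_sdiff_add_card_eq_card hsub
    rw [hcard, hcard] at this
    have h : ((B (N+1) \ B N).card : ℝ) + (2*(N:ℝ)+1)^3 = (2*((N:ℝ)+1)+1)^3 := by exact_mod_cast this
    nlinarith
  rw [nsmul_eq_mul, h3] at h2
  have h4 : (24*((N:ℝ)+1)^2+2) * (1/((N:ℝ)+1)^4) ≤ (24/((N:ℝ)+1/2) - 24/((N:ℝ)+1+1/2)) := by
    have hN0 : (0:ℝ) ≤ N := by positivity
    rw [div_sub_div _ _ (by positivity) (by positivity), mul_one_div, div_le_div_iff₀ (by positivity) (by positivity)]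
    nlinarith [sq_nonneg (N:ℝ), pow_nonneg hN0 3]
  linarith

lemma ksum_le (N : ℕ) (hN : 2 ≤ N) : ksum N ≤ 2204/100 := by
  have : ksum N ≤ 2204/100 - 24/((N:ℝ)+1/2) := by
    induction N, hN using Nat.le_induction with
    | base => have := ksum_two; norm_num at this ⊢; linarith
    | succ m hm ih => have := ksum_succ m hm; push_cast; linarith
  have h : 0 ≤ 24/((N:ℝ)+1/2) := by positivity
  linarith

/-- signed representative -/
def srep (n : ℕ) (k : Fin n) : ℤ := if 2 * (k:ℕ) ≤ n then (k:ℕ) else ((k:ℕ):ℤ) - n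

lemma sum_srep_le (n : ℕ) (hn : 2 ≤ n) :
    ∑ w : Fin 3 → Fin n, 1 / (((srep n (w 0)^2 + srep n (w 1)^2 + srep n (w 2)^2 : ℤ) : ℝ))^2 ≤ 2204/100 := by
  refine le_trans ?_ (ksum_le n hn)
  have hinj : Function.Injective (srep n) := by
    intro a b h
    have := a.2; have := b.2
    unfold srep at h
    ext
    split_ifs at h <;> omega
  have hmem : ∀ k : Fin n, srep n k ∈ Finset.Icc (-(n:ℤ)) n := by
    intro k
    have := k.2
    rw [Finset.mem_Icc]
    unfold srep
    split_ifs <;> omega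
  unfold ksum
  let e : (Fin 3 → Fin n) → ℤ × ℤ × ℤ := fun w => (srep n (w 0), srep n (w 1), srep n (w 2))
  have he : Function.Injective e := by
    intro a b h
    simp only [e, Prod.mk.injEq] at h
    funext i
    fin_cases i
    · exact hinj h.1
    · exact hinj h.2.1
    · exact hinj h.2.2
  refine le_trans (le_of_eq (Finset.sum_map Finset.univ ⟨e, he⟩ (fun p : ℤ × ℤ × ℤ => 1 / (((p.1^2 + p.2.1^2 + p.2.2^2 : ℤ) : ℝ))^2)).symm) ?_
  apply Finset.sum_le_sum_of_subset_of_nonneg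
  · intro p hp
    simp only [Finset.mem_map, Finset.mem_univ, true_and, Function.Embedding.coeFn_mk] at hp
    obtain ⟨w, rfl⟩ := hp
    simp only [e, Finset.mem_product]
    exact ⟨hmem _, hmem _, hmem _⟩
  · intros; positivity

def Ed (t : Fin 3 → ℝ) : ℝ := ∑ i, 4 * Real.sin (Real.pi * t i)^2

def pt (n : ℕ) (w : Fin 3 → Fin n) : Fin 3 → ℝ := fun i => ((w i : ℕ) : ℝ) / n

lemma Ed_nonneg (t) : 0 ≤ Ed t := by unfold Ed; positivity

lemma Ed_eq (t : Fin 3 → ℝ) : 2 * ∑ i, (1 - Real.cos (2 * Real.pi * t i)) = Ed t := by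
  unfold Ed
  rw [Finset.mul_sum]
  refine Finset.sum_congr rfl fun i _ => ?_
  rw [mul_assoc, Real.cos_two_mul, Real.cos_sq']
  ring

lemma Ed_le (t : Fin 3 → ℝ) : Ed t ≤ 4 * Real.pi^2 * ∑ i, (t i)^2 := by
  unfold Ed
  rw [Finset.mul_sum]
  refine Finset.sum_le_sum fun i _ => ?_
  have := Real.sin_sq_le_sq (x := Real.pi * t i)
  nlinarith

lemma le_Ed (t : Fin 3 → ℝ) (h : ∀ i, |t i| ≤ 1/2) : 16 * ∑ i, (t i)^2 ≤ Ed t := by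
  unfold Ed
  rw [Finset.mul_sum]
  refine Finset.sum_le_sum fun i _ => ?_
  have hp := Real.pi_pos
  have := Real.mul_abs_le_abs_sin (x := Real.pi * t i) (by rw [abs_mul, abs_of_pos hp]; nlinarith [h i])
  rw [abs_mul, abs_of_pos hp] at this
  have e : 2 / Real.pi * (Real.pi * |t i|) = 2 * |t i| := by field_simp
  rw [e] at this
  have h2 := pow_le_pow_left₀ (by positivity) this 2
  rw [sq_abs, mul_pow, sq_abs] at h2
  linarith

lemma sin_sq_le_four (n : ℕ) (k : Fin n) (s : ℝ) (hs : |s| ≤ 1/(2*n)) :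
    Real.sin (Real.pi * (((k:ℕ):ℝ)/n))^2 ≤ 4 * Real.sin (Real.pi * (((k:ℕ):ℝ)/n + s))^2 := by
  have hn : 0 < n := k.pos
  have hn' : (0:ℝ) < n := by exact_mod_cast hn
  have hp := Real.pi_pos
  set θ := Real.pi * (((k:ℕ):ℝ)/n) with hθ
  set δ := Real.pi * s with hδ
  rw [mul_add, ← hθ, ← hδ]
  have h1 : Real.sin δ ^2 ≤ Real.sin (θ+δ)^2 := by
    have e : Real.sin (θ+δ)^2 - Real.sin δ^2 = Real.sin (θ + 2*δ) * Real.sin θ := by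
      rw [Real.sin_add, Real.sin_add, Real.sin_two_mul, Real.cos_two_mul]
      have := Real.sin_sq_add_cos_sq θ
      have := Real.sin_sq_add_cos_sq δ
      grind
    rcases Nat.eq_zero_or_pos (k:ℕ) with h0 | h0
    · simp [hθ, h0]
    · have hk1 : (1:ℝ) ≤ ((k:ℕ):ℝ) := by exact_mod_cast h0
      have hk2 : ((k:ℕ):ℝ) + 1 ≤ n := by exact_mod_cast k.2
      have h2 : |2*s| ≤ 1/n := by
        rw [abs_mul, abs_two]
        calc 2*|s| ≤ 2*(1/(2*n)) := by gcongr
          _ = 1/n := by field_simp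
      rw [abs_le] at h2
      have a1 : 1/(n:ℝ) ≤ ((k:ℕ):ℝ)/n := by gcongr
      have a2 : ((k:ℕ):ℝ)/n + 1/n ≤ 1 := by
        rw [← add_div, div_le_one hn']; exact hk2
      have a3 : 0 < 1/(n:ℝ) := by positivity
      have : 0 ≤ Real.sin (θ + 2*δ) := by
        apply Real.sin_nonneg_of_nonneg_of_le_pi
        · have : θ + 2*δ = Real.pi * (((k:ℕ):ℝ)/n + 2*s) := by rw [hθ, hδ]; ring
          rw [this]; apply mul_nonneg hp.le; linarith
        · have : θ + 2*δ = Real.pi * (((k:ℕ):ℝ)/n + 2*s) := by rw [hθ, hδ]; ring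
          rw [this]; nlinarith
      have : 0 ≤ Real.sin θ := by
        apply Real.sin_nonneg_of_nonneg_of_le_pi
        · positivity
        · rw [hθ]; nlinarith
      nlinarith [mul_nonneg ‹0 ≤ Real.sin (θ + 2*δ)› this]
  have h2 : Real.sin θ = Real.sin (θ+δ) * Real.cos δ - Real.cos (θ+δ) * Real.sin δ := by
    rw [← Real.sin_sub]; ring_nf
  have h3 : Real.sin θ^2 ≤ 2 * (Real.sin (θ+δ)^2 + Real.sin δ^2) := by
    rw [h2]
    have c1 := Real.cos_sq_le_one δ
    have c2 := Real.cos_sq_le_one (θ+δ)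
    nlinarith [sq_nonneg (Real.sin (θ+δ) * Real.cos δ + Real.cos (θ+δ) * Real.sin δ), mul_le_mul_of_nonneg_left c1 (sq_nonneg (Real.sin (θ+δ))), mul_le_mul_of_nonneg_left c2 (sq_nonneg (Real.sin δ))]
  linarith

lemma Ed_le_four (n : ℕ) (w : Fin 3 → Fin n) (s : Fin 3 → ℝ) (hs : ∀ i, |s i| ≤ 1/(2*n)) :
    Ed (pt n w) ≤ 4 * Ed (pt n w + s) := by
  unfold Ed
  rw [Finset.mul_sum]
  refine Finset.sum_le_sum fun i _ => ?_
  have := sin_sq_le_four n (w i) (s i) (hs i)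
  simp only [pt, Pi.add_apply]
  linarith

lemma Ed_diff_sq (n : ℕ) (hn : 0 < n) (x : Fin 3 → ℝ) (s : Fin 3 → ℝ) (hs : ∀ i, |s i| ≤ 1/(2*n)) :
    (Ed (x+s) - Ed x)^2 ≤ 6 * Real.pi^2/n^2 * (Ed x + Ed (x+s)) := by
  have hn' : (0:ℝ) < n := by exact_mod_cast hn
  have hp := Real.pi_pos
  have e : Ed (x+s) - Ed x = ∑ i, 4 * (Real.sin (2*(Real.pi * x i) + Real.pi * s i) * Real.sin (Real.pi * s i)) := by
    unfold Ed
    rw [← Finset.sum_sub_distrib]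
    refine Finset.sum_congr rfl fun i _ => ?_
    simp only [Pi.add_apply, mul_add]
    set θ := Real.pi * x i
    set δ := Real.pi * s i
    rw [Real.sin_add, Real.sin_add, Real.sin_two_mul, Real.cos_two_mul]
    have := Real.sin_sq_add_cos_sq θ
    have := Real.sin_sq_add_cos_sq δ
    grind
  rw [e]
  have cs := Finset.sum_mul_sq_le_sq_mul_sq (Finset.univ : Finset (Fin 3)) (fun _ => (1:ℝ)) (fun i => 4 * (Real.sin (2*(Real.pi * x i) + Real.pi * s i) * Real.sin (Real.pi * s i)))
  simp only [one_mul, one_pow, Finset.sum_const, Finset.card_univ, Fintype.card_fin, nsmul_eq_mul, mul_one] at cs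
  refine cs.trans ?_
  unfold Ed
  rw [← Finset.sum_add_distrib, Finset.mul_sum, Finset.mul_sum]
  refine Finset.sum_le_sum fun i _ => ?_
  simp only [Pi.add_apply, mul_add]
  have hd : Real.sin (Real.pi * s i)^2 ≤ Real.pi^2/(4*n^2) := by
    refine (Real.sin_sq_le_sq).trans ?_
    have : (s i)^2 ≤ (1/(2*n))^2 := by rw [← sq_abs]; gcongr; exact hs i
    rw [mul_pow]
    calc Real.pi^2 * (s i)^2 ≤ Real.pi^2 * (1/(2*n))^2 := by gcongr
      _ = _ := by field_simp; norm_num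
  set θ := Real.pi * x i
  set δ := Real.pi * s i
  have h2 : Real.sin (2*θ+δ)^2 ≤ 2*(Real.sin θ^2 + Real.sin (θ+δ)^2) := by
    have : 2*θ+δ = θ + (θ+δ) := by ring
    rw [this, Real.sin_add]
    have c1 := Real.cos_sq_le_one θ
    have c2 := Real.cos_sq_le_one (θ+δ)
    nlinarith [sq_nonneg (Real.sin θ * Real.cos (θ+δ) - Real.cos θ * Real.sin (θ+δ)), mul_le_mul_of_nonneg_left c1 (sq_nonneg (Real.sin (θ+δ))), mul_le_mul_of_nonneg_left c2 (sq_nonneg (Real.sin θ))]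
  have h3 : Real.sin (2*θ+δ)^2 * Real.sin δ^2 ≤ (2*(Real.sin θ^2 + Real.sin (θ+δ)^2)) * (Real.pi^2/(4*n^2)) := by
    gcongr
  have h4 : 6 * Real.pi^2/n^2 * (4 * Real.sin θ^2) + 6 * Real.pi^2/n^2 * (4 * Real.sin (θ+δ)^2) = 48 * ((2*(Real.sin θ^2 + Real.sin (θ+δ)^2)) * (Real.pi^2/(4*n^2))) := by
    field_simp; ring
  rw [h4]
  push_cast
  nlinarith

lemma Ed_symm (x s : Fin 3 → ℝ) :
    |(Ed (x+s) - Ed x) + (Ed (x + -s) - Ed x)| ≤ 8 * Real.pi^2 * ∑ i, (s i)^2 := by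
  unfold Ed
  rw [← Finset.sum_sub_distrib, ← Finset.sum_sub_distrib, ← Finset.sum_add_distrib, Finset.mul_sum]
  refine (Finset.abs_sum_le_sum_abs _ _).trans (Finset.sum_le_sum fun i _ => ?_)
  simp only [Pi.add_apply, Pi.neg_apply, mul_add, mul_neg]
  have hd := Real.sin_sq_le_sq (x := Real.pi * s i)
  set θ := Real.pi * x i
  have : 8 * Real.pi^2 * (s i)^2 = 8 * (Real.pi * s i)^2 := by ring
  rw [this]
  set δ := Real.pi * s i
  have e : 4 * Real.sin (θ+δ)^2 - 4 * Real.sin θ^2 + (4 * Real.sin (θ+ -δ)^2 - 4 * Real.sin θ^2) = 8 * (Real.cos (2*θ) * Real.sin δ^2) := by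
    rw [Real.sin_add, Real.sin_add, Real.cos_neg, Real.sin_neg, Real.cos_two_mul]
    have := Real.sin_sq_add_cos_sq θ
    have := Real.sin_sq_add_cos_sq δ
    grind
  rw [e, abs_mul, abs_mul, abs_of_nonneg (sq_nonneg (Real.sin δ)), abs_of_pos (by norm_num : (0:ℝ) < 8)]
  have := Real.abs_cos_le_one (2*θ)
  nlinarith [mul_le_mul_of_nonneg_right this (sq_nonneg (Real.sin δ))]

lemma sin_sq_ge (y : ℝ) (hy : |y| ≤ Real.pi/2) : y^2 ≤ Real.sin y^2 * (1 + y^2) := by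
  wlog h0 : 0 ≤ y generalizing y
  · have := this (-y) (by rwa [abs_neg]) (by linarith)
    simpa using this
  rw [abs_of_nonneg h0] at hy
  have hc : 0 ≤ Real.cos y := Real.cos_nonneg_of_mem_Icc ⟨by linarith, hy⟩
  have h : y * Real.cos y ≤ Real.sin y := by
    rcases hy.lt_or_eq with h | h
    · have := Real.le_tan h0 h
      have hc : 0 < Real.cos y := Real.cos_pos_of_mem_Ioo ⟨by linarith, h⟩
      rwa [Real.tan_eq_sin_div_cos, le_div_iff₀ hc] at this
    · rw [h]; simp
  have h2 := pow_le_pow_left₀ (by positivity) h 2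
  have := Real.sin_sq_add_cos_sq y
  have e : Real.cos y^2 = 1 - Real.sin y^2 := by linarith
  rw [mul_pow, e] at h2
  nlinarith

lemma inv_Ed_sq (n : ℕ) (w : Fin 3 → Fin n) (hw : ∃ i, (w i : ℕ) ≠ 0) :
    0 < Ed (pt n w) ∧ 1 / (Ed (pt n w))^2 ≤ 
      11 * (n:ℝ)^4 / (160 * Real.pi^4) * (1 / (((srep n (w 0)^2 + srep n (w 1)^2 + srep n (w 2)^2 : ℤ) : ℝ))^2) + 11/16 := by
  have hn : 0 < n := (w 0).pos
  have hn' : (0:ℝ) < n := by exact_mod_cast hn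
  have hp := Real.pi_pos
  set y : Fin 3 → ℝ := fun i => Real.pi * ((srep n (w i) : ℝ)/n) with hy
  have hsin : ∀ i, Real.sin (Real.pi * pt n w i)^2 = Real.sin (y i)^2 := by
    intro i
    simp only [pt, hy, srep]
    split_ifs
    · simp
    · push_cast
      have : Real.pi * ((((w i : ℕ):ℝ) - n)/n) = Real.pi * (((w i:ℕ):ℝ)/n) - Real.pi := by field_simp
      rw [this, Real.sin_sub_pi]; ring
  have hyb : ∀ i, |y i| ≤ Real.pi/2 := by
    intro i
    have h1 : |(2 * srep n (w i))| ≤ n := by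
      have := (w i).2
      rw [abs_le]; unfold srep; split_ifs <;> omega
    have h2 : |(2 * (srep n (w i):ℝ))| ≤ n := by exact_mod_cast h1
    rw [abs_mul, abs_two] at h2
    simp only [hy]
    rw [abs_mul, abs_div, abs_of_pos hp, abs_of_pos hn']
    have : |(srep n (w i):ℝ)|/n ≤ 1/2 := by rw [div_le_iff₀ hn']; linarith
    nlinarith
  set R : ℝ := ((srep n (w 0)^2 + srep n (w 1)^2 + srep n (w 2)^2 : ℤ) : ℝ) with hR
  have hRpos : 0 < R := by
    rw [hR]
    norm_cast
    obtain ⟨i, hi⟩ := hw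
    have hne : srep n (w i) ≠ 0 := by
      have := (w i).2
      unfold srep; split_ifs <;> omega
    have := sq_nonneg (srep n (w 0)); have := sq_nonneg (srep n (w 1)); have := sq_nonneg (srep n (w 2))
    have h3 : 0 < srep n (w i)^2 := by positivity
    fin_cases i <;> simp at h3 <;> linarith
  set Y := ∑ i, (y i)^2 with hY
  have hYR : Y = Real.pi^2 * R / n^2 := by
    rw [hY, hR, Fin.sum_univ_three]
    simp only [hy]
    push_cast
    field_simp
  have hYpos : 0 < Y := by rw [hYR]; positivity
  have hE : 4 * Y ≤ Ed (pt n w) * (1 + Y) := by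
    unfold Ed
    rw [hY, Finset.mul_sum, Finset.sum_mul]
    refine Finset.sum_le_sum fun i _ => ?_
    rw [hsin]
    have h1 := sin_sq_ge (y i) (hyb i)
    have h2 : (y i)^2 ≤ ∑ i, (y i)^2 := Finset.single_le_sum (f := fun i => (y i)^2) (fun i _ => sq_nonneg _) (Finset.mem_univ i)
    nlinarith [mul_le_mul_of_nonneg_left h2 (sq_nonneg (Real.sin (y i)))]
  have hEpos : 0 < Ed (pt n w) := by
    by_contra h
    push Not at h
    nlinarith
  refine ⟨hEpos, ?_⟩
  have h1 : 1 / Ed (pt n w) ≤ (1/Y + 1)/4 := by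
    rw [div_le_iff₀ hEpos]
    have : (1/Y+1)/4 * Ed (pt n w) = (Ed (pt n w) * (1+Y))/(4*Y) := by field_simp
    rw [this, le_div_iff₀ (by positivity)]; linarith
  have h2 : (1 / Ed (pt n w))^2 ≤ ((1/Y + 1)/4)^2 := by gcongr
  have h3 : 11 * (n:ℝ)^4 / (160 * Real.pi^4) * (1/R^2) = 11/160 * (1/Y)^2 := by
    rw [hYR]; field_simp
  rw [h3]
  rw [_root_.one_div_pow] at h2
  nlinarith [sq_nonneg (1/Y - 10)]

lemma ball_int (R : ℝ) (hR : 0 < R) :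
    IntegrableOn (fun s : Fin 3 → ℝ => 1 / ∑ i, (s i)^2) {s | ∑ i, (s i)^2 < R^2} ∧
    ∫ s in {s : Fin 3 → ℝ | ∑ i, (s i)^2 < R^2}, 1 / ∑ i, (s i)^2 = 4 * Real.pi * R := by
  have hm : MeasurableSet {s : Fin 3 → ℝ | ∑ i, (s i)^2 < R^2} := by
    apply measurableSet_lt <;> fun_prop
  let F : ℝ → ℝ := (Set.Iio R).indicator (fun r => 1 / r^2)
  have hF : ∀ s : Fin 3 → ℝ, Set.indicator {s : Fin 3 → ℝ | ∑ i, (s i)^2 < R^2} (fun s : Fin 3 → ℝ => 1 / ∑ i, (s i)^2) s = F ‖(WithLp.toLp 2 s : EuclideanSpace ℝ (Fin 3))‖ := by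
    intro s
    have e : ‖(WithLp.toLp 2 s : EuclideanSpace ℝ (Fin 3))‖^2 = ∑ i, (s i)^2 := by
      rw [EuclideanSpace.norm_sq_eq]; simp
    simp only [F, Set.indicator_apply, Set.mem_ofPred_eq, Set.mem_Iio, e.symm]
    have : (‖(WithLp.toLp 2 s : EuclideanSpace ℝ (Fin 3))‖^2 < R^2) ↔ ‖(WithLp.toLp 2 s : EuclideanSpace ℝ (Fin 3))‖ < R := by
      rw [sq_lt_sq₀ (norm_nonneg _) hR.le]
    simp only [this]
  have hF' : (Set.indicator {s : Fin 3 → ℝ | ∑ i, (s i)^2 < R^2} (fun s : Fin 3 → ℝ => 1 / ∑ i, (s i)^2)) = (fun s => (fun x : EuclideanSpace ℝ (Fin 3) => F ‖x‖) (WithLp.toLp 2 s)) := funext hF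
  have key : ∀ y ∈ Set.Ioi (0:ℝ), y^(Module.finrank ℝ (EuclideanSpace ℝ (Fin 3)) - 1) • F y = (Set.Iio R).indicator (fun _ => (1:ℝ)) y := by
    intro y hy
    have hy : 0 < y := hy
    simp only [F, Set.indicator_apply, finrank_euclideanSpace, Fintype.card_fin]
    split_ifs
    · simp; field_simp
    · simp
  have hI : IntegrableOn ((Set.Iio R).indicator (fun _ => (1:ℝ))) (Set.Ioi 0) := by
    rw [IntegrableOn, integrable_indicator_iff measurableSet_Iio, IntegrableOn, Measure.restrict_restrict measurableSet_Iio, Set.inter_comm, Set.Ioi_inter_Iio]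
    simp
  constructor
  · rw [← integrable_indicator_iff hm, hF']
    have := (PiLp.volume_preserving_toLp (Fin 3)).integrable_comp_emb (MeasurableEquiv.toLp 2 (Fin 3 → ℝ)).measurableEmbedding (g := fun x : EuclideanSpace ℝ (Fin 3) => F ‖x‖)
    refine this.2 ?_
    rw [integrable_fun_norm_addHaar]
    exact hI.congr_fun (fun y hy => (key y hy).symm) measurableSet_Ioi
  · rw [← integral_indicator hm, hF']
    have := (PiLp.volume_preserving_toLp (Fin 3)).integral_comp (MeasurableEquiv.toLp 2 (Fin 3 → ℝ)).measurableEmbedding (g := fun x : EuclideanSpace ℝ (Fin 3) => F ‖x‖)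
    rw [this, integral_fun_norm_addHaar, setIntegral_congr_fun measurableSet_Ioi key, setIntegral_indicator measurableSet_Iio, Set.Ioi_inter_Iio]
    simp [Measure.real, EuclideanSpace.volume_ball_fin_three, hR.le]
    rw [ENNReal.toReal_ofReal (by positivity)]
    ring

def cube (h : ℝ) : Set (Fin 3 → ℝ) := {s | ∀ i, -h ≤ s i ∧ s i < h}

lemma cube_pi (h : ℝ) : cube h = Set.pi Set.univ (fun _ => Set.Ico (-h) h) := by
  ext s; simp [cube]

lemma cube_meas (h : ℝ) : MeasurableSet (cube h) := by
  rw [cube_pi]; exact MeasurableSet.univ_pi (fun _ => measurableSet_Ico)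

lemma cube_vol (h : ℝ) (hh : 0 < h) : volume.real (cube h) = (2*h)^3 := by
  rw [cube_pi, Measure.real, volume_pi_pi]
  simp
  rw [ENNReal.toReal_ofReal (by linarith)]
  ring

lemma cube_vol_ne (h : ℝ) : volume (cube h) ≠ ⊤ := by
  rw [cube_pi, volume_pi_pi]
  simp

lemma cube_restrict (h : ℝ) : (volume : Measure (Fin 3 → ℝ)).restrict (cube h) = Measure.pi (fun _ => volume.restrict (Set.Ico (-h) h)) := by
  rw [cube_pi, volume_pi, Measure.restrict_pi_pi]

lemma cube_cont (h : ℝ) (F : (Fin 3 → ℝ) → ℝ) (hF : Continuous F) : IntegrableOn F (cube h) := by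
  have : cube h ⊆ Set.Icc (fun _ => -h) (fun _ => h) := by
    intro s hs
    exact ⟨fun i => (hs i).1, fun i => (hs i).2.le⟩
  exact (hF.continuousOn.integrableOn_compact isCompact_Icc).mono_set this

lemma cube_second (h : ℝ) (hh : 0 < h) : ∫ s in cube h, ∑ i, (s i)^2 = 8 * h^5 := by
  rw [integral_finsetSum _ (fun i _ => cube_cont h _ (by fun_prop))]
  have : ∀ i : Fin 3, ∫ s in cube h, (s i)^2 = 8*h^5/3 := by
    intro i
    rw [cube_restrict]
    have e : ∀ s : Fin 3 → ℝ, (s i)^2 = ∏ j, (fun (j : Fin 3) (x : ℝ) => if j = i then x^2 else 1) j (s j) := by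
      intro s; simp
    rw [integral_congr_ae (Filter.Eventually.of_forall e)]
    refine (integral_fintype_prod_eq_prod (μ := fun _ : Fin 3 => (volume : Measure ℝ).restrict (Set.Ico (-h) h)) (fun (j : Fin 3) (x : ℝ) => if j = i then x^2 else 1)).trans ?_
    have e1 : ∫ x in Set.Ico (-h) h, x^2 = 2*h^3/3 := by
      rw [integral_Ico_eq_integral_Ioc, ← intervalIntegral.integral_of_le (by linarith), integral_pow]
      norm_num; ring
    have e2 : ∫ x in Set.Ico (-h) h, (1:ℝ) = 2*h := by
      simp [Measure.real]
      rw [ENNReal.toReal_ofReal (by linarith)]; ring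
    have : ∀ j : Fin 3, ∫ x in Set.Ico (-h) h, (if j = i then x^2 else 1) = if j = i then 2*h^3/3 else 2*h := by
      intro j; split_ifs
      · exact e1
      · exact e2
    simp_rw [this]
    fin_cases i <;> simp [Fin.prod_univ_three] <;> ring
  simp_rw [this]
  simp; ring

lemma cube_neg (h : ℝ) (F : (Fin 3 → ℝ) → ℝ) : ∫ s in cube h, F (-s) = ∫ s in cube h, F s := by
  have hae : cube h =ᵐ[volume] Set.Icc (fun _ => -h) (fun _ => h) := by
    rw [cube_pi, volume_pi]
    exact Measure.univ_pi_Ico_ae_eq_Icc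
  rw [setIntegral_congr_set hae, setIntegral_congr_set hae]
  have hpre : (fun s : Fin 3 → ℝ => -s) ⁻¹' (Set.Icc (fun _ => -h) (fun _ => h)) = Set.Icc (fun _ => -h) (fun _ => h) := by
    ext s
    simp only [Set.mem_preimage, Set.mem_Icc, Pi.le_def, Pi.neg_apply]
    constructor
    · rintro ⟨a, b⟩; exact ⟨fun i => by linarith [b i], fun i => by linarith [a i]⟩
    · rintro ⟨a, b⟩; exact ⟨fun i => by linarith [b i], fun i => by linarith [a i]⟩
  have := (Measure.measurePreserving_neg (volume : Measure (Fin 3 → ℝ))).setIntegral_preimage_emb (Homeomorph.neg (Fin 3 → ℝ)).measurableEmbedding F (Set.Icc (fun _ => -h) (fun _ => h))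
  rw [hpre] at this
  exact this
def cell (n : ℕ) (w : Fin 3 → Fin n) : Set (Fin 3 → ℝ) := {t | ∀ i, ⌊(n:ℝ) * t i + 1/2⌋ = ((w i : ℕ) : ℤ)}

lemma cell_meas (n : ℕ) (w : Fin 3 → Fin n) : MeasurableSet (cell n w) := by
  have : cell n w = ⋂ i, {t : Fin 3 → ℝ | ⌊(n:ℝ) * t i + 1/2⌋ = ((w i : ℕ) : ℤ)} := by
    ext t; simp [cell]
  rw [this]
  refine MeasurableSet.iInter fun i => ?_
  have hm : Measurable (fun t : Fin 3 → ℝ => ⌊(n:ℝ) * t i + 1/2⌋) := by fun_prop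
  exact hm (measurableSet_singleton _)

lemma cell_pre (n : ℕ) (hn : 0 < n) (w : Fin 3 → Fin n) :
    (fun s => pt n w + s) ⁻¹' (cell n w) = cube (1/(2*n)) := by
  have hn' : (0:ℝ) < n := by exact_mod_cast hn
  ext s
  simp only [cell, cube, Set.mem_preimage, Set.mem_ofPred_eq, pt, Pi.add_apply]
  refine forall_congr' fun i => ?_
  have e : (n:ℝ) * (((w i:ℕ):ℝ)/n + s i) + 1/2 = (n * s i + 1/2) + (((w i:ℕ):ℤ):ℝ) := by
    push_cast; field_simp; ring
  rw [e, Int.floor_add_intCast, add_eq_right, Int.floor_eq_zero_iff, Set.mem_Ico]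
  have e1 : -(1/(2*(n:ℝ))) ≤ s i ↔ 0 ≤ (n:ℝ) * s i + 1/2 := by
    rw [← neg_div, div_le_iff₀ (by positivity)]; constructor <;> intro h <;> linarith
  have e2 : s i < (1/(2*(n:ℝ))) ↔ (n:ℝ) * s i + 1/2 < 1 := by
    rw [lt_div_iff₀ (by positivity)]; constructor <;> intro h <;> linarith
  rw [e1, e2]

open scoped Pointwise in
lemma cell_union (n : ℕ) (hn : 0 < n) :
    (⋃ w, cell n w) = (fun _ : Fin 3 => -(1/(2*(n:ℝ)))) +ᵥ ZSpan.fundamentalDomain (Pi.basisFun ℝ (Fin 3)) := by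
  have hn' : (0:ℝ) < n := by exact_mod_cast hn
  ext t
  rw [Set.mem_vadd_set_iff_neg_vadd_mem, ZSpan.mem_fundamentalDomain]
  simp only [Set.mem_iUnion, Pi.basisFun_repr, vadd_eq_add, Pi.add_apply, Pi.neg_apply, neg_neg, Set.mem_Ico]
  have key : ∀ i, (0 ≤ 1/(2*(n:ℝ)) + t i ∧ 1/(2*(n:ℝ)) + t i < 1) ↔ (0 ≤ (n:ℝ) * t i + 1/2 ∧ (n:ℝ) * t i + 1/2 < n) := by
    intro i
    have : (n:ℝ) * t i + 1/2 = n * (1/(2*(n:ℝ)) + t i) := by field_simp; ring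
    rw [this]
    refine and_congr ?_ ?_
    · rw [mul_nonneg_iff_of_pos_left hn']
    · rw [mul_lt_iff_lt_one_right hn']
  constructor
  · rintro ⟨w, hw⟩ i
    rw [key]
    have h := hw i
    rw [Int.floor_eq_iff] at h
    have h2 : ((w i:ℕ):ℝ) + 1 ≤ n := by exact_mod_cast (w i).2
    have h3 : (0:ℝ) ≤ ((w i:ℕ):ℝ) := by positivity
    push_cast at h
    exact ⟨by linarith, by linarith⟩
  · intro h
    have h' := fun i => (key i).1 (h i)
    have hlt : ∀ i, ⌊(n:ℝ) * t i + 1/2⌋.toNat < n := by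
      intro i
      have h1 : ⌊(n:ℝ) * t i + 1/2⌋ < (n:ℤ) := Int.floor_lt.2 (by exact_mod_cast (h' i).2)
      omega
    refine ⟨fun i => ⟨⌊(n:ℝ) * t i + 1/2⌋.toNat, hlt i⟩, fun i => ?_⟩
    have h1 : 0 ≤ ⌊(n:ℝ) * t i + 1/2⌋ := Int.floor_nonneg.2 (h' i).1
    simp only
    omega

lemma decomp (n : ℕ) (hn : 0 < n) (F : (Fin 3 → ℝ) → ℝ)
    (hper : ∀ (t : Fin 3 → ℝ) (z : Fin 3 → ℤ), F ((fun i => (z i : ℝ)) + t) = F t)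
    (hint : ∀ w : Fin 3 → Fin n, IntegrableOn (fun s => F (pt n w + s)) (cube (1/(2*n)))) :
    ∫ t in Set.Icc (0 : Fin 3 → ℝ) 1, F t = ∑ w : Fin 3 → Fin n, ∫ s in cube (1/(2*n)), F (pt n w + s) := by
  have hemb : ∀ w : Fin 3 → Fin n, MeasurableEmbedding (fun s => pt n w + s) := fun w => measurableEmbedding_addLeft _
  have hmp : ∀ w : Fin 3 → Fin n, MeasurePreserving (fun s => pt n w + s) volume volume := fun w => measurePreserving_add_left _ _
  have h1 : ∀ w : Fin 3 → Fin n, ∫ s in cube (1/(2*n)), F (pt n w + s) = ∫ t in cell n w, F t := by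
    intro w
    rw [← cell_pre n hn w]
    exact (hmp w).setIntegral_preimage_emb (hemb w) F _
  have h2 : ∀ w : Fin 3 → Fin n, IntegrableOn F (cell n w) := by
    intro w
    rw [← (hmp w).integrableOn_comp_preimage (hemb w), cell_pre n hn w]
    exact hint w
  have hdisj : Pairwise (Function.onFun Disjoint (cell n)) := by
    intro a b hab
    rw [Function.onFun, Set.disjoint_left]
    intro t ha hb
    apply hab
    funext i
    have := (ha i).symm.trans (hb i)
    ext
    exact_mod_cast this
  simp_rw [h1]
  rw [← integral_iUnion_fintype (fun w => cell_meas n w) hdisj h2, cell_union n hn]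
  have hfd := ZSpan.isAddFundamentalDomain' (Pi.basisFun ℝ (Fin 3)) (volume : Measure (Fin 3 → ℝ))
  have hfd2 := hfd.vadd_of_comm (G' := Fin 3 → ℝ) (fun _ : Fin 3 => -(1/(2*(n:ℝ))))
  haveI : Countable (Submodule.span ℤ (Set.range (Pi.basisFun ℝ (Fin 3)))).toAddSubgroup := inferInstanceAs (Countable (Submodule.span ℤ (Set.range (Pi.basisFun ℝ (Fin 3)))))
  rw [← hfd.setIntegral_eq hfd2]
  · have : ZSpan.fundamentalDomain (Pi.basisFun ℝ (Fin 3)) = Set.pi Set.univ (fun _ => Set.Ico (0:ℝ) 1) := by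
      ext t; simp [ZSpan.mem_fundamentalDomain]
    rw [this]
    apply setIntegral_congr_set
    rw [volume_pi]
    exact (Measure.univ_pi_Ico_ae_eq_Icc (f := fun _ => (0:ℝ)) (g := fun _ => (1:ℝ))).symm
  · rintro ⟨g, hg⟩ x
    rw [Submodule.mem_toAddSubgroup, Module.Basis.mem_span_iff_repr_mem] at hg
    choose z hz using hg
    have := hper x z
    rw [← this]
    congr 1
    funext i
    have := hz i
    simp at this
    simp [AddSubgroup.vadd_def, this]

lemma Ed_cont : Continuous Ed := by unfold Ed; fun_prop

lemma cube_abs {h : ℝ} {s : Fin 3 → ℝ} (hs : s ∈ cube h) (i : Fin 3) : |s i| ≤ h :=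
  abs_le.2 ⟨(hs i).1, (hs i).2.le⟩

lemma one_div_Ed_meas : Measurable (fun t => 1 / Ed t) :=
  measurable_const.div Ed_cont.measurable

/-- The average over a cell away from the origin. -/
lemma cell_bound (n : ℕ) (hn : 0 < n) (w : Fin 3 → Fin n) (hE : 0 < Ed (pt n w)) :
    IntegrableOn (fun s => 1 / Ed (pt n w + s)) (cube (1/(2*n))) ∧
    1/(n:ℝ)^3 * (1 / Ed (pt n w)) - Real.pi^2/(n:ℝ)^5 * (1/(Ed (pt n w))^2)
      ≤ ∫ s in cube (1/(2*n)), 1 / Ed (pt n w + s) ∧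
    ∫ s in cube (1/(2*n)), 1 / Ed (pt n w + s) ≤
      1/(n:ℝ)^3 * (1 / Ed (pt n w)) + 31 * Real.pi^2/(n:ℝ)^5 * (1/(Ed (pt n w))^2) := by
  have hn' : (0:ℝ) < n := by exact_mod_cast hn
  have hp := Real.pi_pos
  set x := pt n w with hx
  set e := Ed x with he
  set h : ℝ := 1/(2*(n:ℝ)) with hh
  have hhpos : 0 < h := by positivity
  have hpos : ∀ s ∈ cube h, e ≤ 4 * Ed (x+s) := fun s hs => Ed_le_four n w s (fun i => cube_abs hs i)
  have hpos' : ∀ s ∈ cube h, 0 < Ed (x+s) := fun s hs => by have := hpos s hs; linarith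
  have hlow : ∀ s ∈ cube h, 1/e - 1/e^2 * (Ed (x+s) - e) ≤ 1 / Ed (x+s) := by
    intro s hs
    have ha := hpos' s hs
    have : 1 / Ed (x+s) - (1/e - 1/e^2 * (Ed (x+s) - e)) = (Ed (x+s) - e)^2/(Ed (x+s) * e^2) := by
      field_simp; ring
    have h2 : 0 ≤ (Ed (x+s) - e)^2/(Ed (x+s) * e^2) := by positivity
    linarith
  have hup : ∀ s ∈ cube h, 1 / Ed (x+s) ≤ 1/e - 1/e^2 * (Ed (x+s) - e) + 30*Real.pi^2/(n:ℝ)^2*(1/e^2) := by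
    intro s hs
    have ha := hpos' s hs
    have h4 := hpos s hs
    have : 1 / Ed (x+s) - (1/e - 1/e^2 * (Ed (x+s) - e)) = (Ed (x+s) - e)^2/(Ed (x+s) * e^2) := by
      field_simp; ring
    have h2 : (Ed (x+s) - e)^2/(Ed (x+s) * e^2) ≤ 30*Real.pi^2/(n:ℝ)^2*(1/e^2) := by
      rw [div_le_iff₀ (by positivity)]
      have h5 := Ed_diff_sq n hn x s (fun i => cube_abs hs i)
      refine h5.trans ?_
      have : 30*Real.pi^2/(n:ℝ)^2*(1/e^2) * (Ed (x+s) * e^2) = 6*Real.pi^2/(n:ℝ)^2 * (5 * Ed (x+s)) := by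
        field_simp; ring
      rw [this]
      gcongr
      linarith
    linarith
  have hmeas : Measurable (fun s => 1 / Ed (x+s)) := one_div_Ed_meas.comp (measurable_const_add x)
  have hint : IntegrableOn (fun s => 1 / Ed (x+s)) (cube h) := by
    refine Integrable.mono' (g := fun _ => 4/e) (integrableOn_const (cube_vol_ne h)) hmeas.aestronglyMeasurable ?_
    refine (ae_restrict_iff' (cube_meas h)).2 (Filter.Eventually.of_forall fun s hs => ?_)
    have ha := hpos' s hs
    rw [Real.norm_of_nonneg (by positivity), div_le_div_iff₀ ha hE]
    linarith [hpos s hs]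
  have hLc : Continuous (fun s => Ed (x+s) - e) := (Ed_cont.comp (continuous_const.add continuous_id)).sub continuous_const
  have hL : IntegrableOn (fun s => Ed (x+s) - e) (cube h) := cube_cont h _ hLc
  have hLn : IntegrableOn (fun s => Ed (x+ -s) - e) (cube h) := cube_cont h _ (hLc.comp continuous_neg)
  set J := ∫ s in cube h, (Ed (x+s) - e) with hJ
  have hJb : |J| ≤ Real.pi^2/(n:ℝ)^5 := by
    have h1 : 2 * J = ∫ s in cube h, ((Ed (x+s) - e) + (Ed (x+ -s) - e)) := by
      rw [integral_add hL hLn, cube_neg h (fun s => Ed (x+s) - e)]; ring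
    have h2 : |2 * J| ≤ ∫ s in cube h, 8 * Real.pi^2 * ∑ i, (s i)^2 := by
      rw [h1, ← Real.norm_eq_abs]
      apply norm_integral_le_of_norm_le (cube_cont h _ (by fun_prop))
      exact Filter.Eventually.of_forall fun s => Ed_symm x s
    rw [integral_const_mul, cube_second h hhpos, abs_mul, abs_two] at h2
    have h3 : 8 * Real.pi^2 * (8*h^5) = 2 * (Real.pi^2/(n:ℝ)^5) := by
      rw [hh]; field_simp; norm_num
    linarith
  rw [abs_le] at hJb
  have hvol : volume.real (cube h) = 1/(n:ℝ)^3 := by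
    rw [cube_vol h hhpos, hh]; field_simp
  have hc : ∀ c : ℝ, ∫ s in cube h, c = 1/(n:ℝ)^3 * c := by
    intro c; rw [setIntegral_const, hvol, smul_eq_mul]
  have hci : ∀ c : ℝ, IntegrableOn (fun _ : Fin 3 → ℝ => c) (cube h) := fun c => integrableOn_const (cube_vol_ne h)
  have hlin : IntegrableOn (fun s => 1/e - 1/e^2 * (Ed (x+s) - e)) (cube h) := (hci _).sub (hL.const_mul _)
  have hlinI : ∫ s in cube h, (1/e - 1/e^2 * (Ed (x+s) - e)) = 1/(n:ℝ)^3 * (1/e) - 1/e^2 * J := by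
    rw [integral_sub (hci _) (hL.const_mul _), hc, integral_const_mul]
  have hq : 0 < 1/e^2 := by positivity
  refine ⟨hint, ?_, ?_⟩
  · have := setIntegral_mono_on hlin hint (cube_meas h) hlow
    rw [hlinI] at this
    nlinarith [mul_le_mul_of_nonneg_left hJb.2 hq.le]
  · have := setIntegral_mono_on hint (hlin.add (hci _)) (cube_meas h) hup
    have e2 := integral_add hlin (hci (30*Real.pi^2/(n:ℝ)^2*(1/e^2)))
    rw [hlinI, hc] at e2
    refine this.trans (e2.le.trans ?_)
    have e3 : 1/(n:ℝ)^3 * (30*Real.pi^2/(n:ℝ)^2*(1/e^2)) = 30 * (Real.pi^2/(n:ℝ)^5) * (1/e^2) := by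
      field_simp
    have e4 : 31 * Real.pi^2/(n:ℝ)^5 = 31 * (Real.pi^2/(n:ℝ)^5) := by ring
    rw [e3, e4]
    nlinarith [mul_le_mul_of_nonneg_left hJb.1 hq.le]

lemma zero_cell (h : ℝ) (hh : 0 < h) (hh2 : h ≤ 1/2) :
    IntegrableOn (fun s => 1 / Ed s) (cube h) ∧
    h / Real.pi ≤ ∫ s in cube h, 1 / Ed s ∧
    ∫ s in cube h, 1 / Ed s ≤ Real.pi * h / 2 := by
  have hp := Real.pi_pos
  obtain ⟨i1, v1⟩ := ball_int h hh
  obtain ⟨i2, v2⟩ := ball_int (2*h) (by positivity)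
  have sub1 : {s : Fin 3 → ℝ | ∑ i, (s i)^2 < h^2} ⊆ cube h := by
    intro s hs i
    have h2 : (s i)^2 ≤ ∑ i, (s i)^2 := Finset.single_le_sum (f := fun i => (s i)^2) (fun i _ => sq_nonneg _) (Finset.mem_univ i)
    have := abs_lt_of_sq_lt_sq (h2.trans_lt hs) hh.le
    rw [abs_lt] at this
    exact ⟨this.1.le, this.2⟩
  have sub2 : cube h ⊆ {s : Fin 3 → ℝ | ∑ i, (s i)^2 < (2*h)^2} := by
    intro s hs
    have : ∀ i, (s i)^2 ≤ h^2 := fun i => sq_le_sq' (hs i).1 (hs i).2.le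
    simp only [Set.mem_ofPred_eq, Fin.sum_univ_three]
    nlinarith [this 0, this 1, this 2]
  have hle : ∀ s ∈ cube h, 16 * ∑ i, (s i)^2 ≤ Ed s := fun s hs => le_Ed s (fun i => (cube_abs hs i).trans hh2)
  have nn : ∀ s : Fin 3 → ℝ, 0 ≤ ∑ i, (s i)^2 := fun s => by positivity
  have up : ∀ s ∈ cube h, 1 / Ed s ≤ 1/16 * (1 / ∑ i, (s i)^2) := by
    intro s hs
    have h1 := hle s hs
    rcases (nn s).eq_or_lt with h0 | h0
    · have h3 := Ed_le s
      rw [← h0] at h3 h1 ⊢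
      have : Ed s = 0 := by linarith
      simp [this]
    · have : 1/16 * (1 / ∑ i, (s i)^2) = 1/(16 * ∑ i, (s i)^2) := by field_simp
      rw [this]
      gcongr
  have low : ∀ s ∈ cube h, 1/(4*Real.pi^2) * (1 / ∑ i, (s i)^2) ≤ 1 / Ed s := by
    intro s hs
    have h1 := hle s hs
    rcases (nn s).eq_or_lt with h0 | h0
    · rw [← h0]
      have := Ed_nonneg s
      simp [this]
    · have : 1/(4*Real.pi^2) * (1 / ∑ i, (s i)^2) = 1/(4*Real.pi^2 * ∑ i, (s i)^2) := by field_simp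
      rw [this]
      have : 0 < Ed s := by linarith
      have := Ed_le s
      gcongr
  have i2' := i2.mono_set sub2
  have hint : IntegrableOn (fun s => 1 / Ed s) (cube h) := by
    refine Integrable.mono' (i2'.const_mul (1/16)) one_div_Ed_meas.aestronglyMeasurable ?_
    refine (ae_restrict_iff' (cube_meas h)).2 (Filter.Eventually.of_forall fun s hs => ?_)
    have := Ed_nonneg s
    rw [Real.norm_of_nonneg (by positivity)]
    exact up s hs
  refine ⟨hint, ?_, ?_⟩
  · have m1 : MeasurableSet {s : Fin 3 → ℝ | ∑ i, (s i)^2 < h^2} := by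
      apply measurableSet_lt <;> fun_prop
    have a1 := setIntegral_mono_on (i1.const_mul (1/(4*Real.pi^2))) (hint.mono_set sub1) m1 (fun s hs => low s (sub1 hs))
    have a2 := setIntegral_mono_set hint (Filter.Eventually.of_forall fun s => by
      have := Ed_nonneg s
      simp only [Pi.zero_apply]; positivity) (HasSubset.Subset.eventuallyLE sub1)
    rw [integral_const_mul, v1] at a1
    have : 1/(4*Real.pi^2) * (4*Real.pi*h) = h/Real.pi := by field_simp
    linarith
  · have a1 := setIntegral_mono_on hint (i2'.const_mul (1/16)) (cube_meas h) up
    have a2 := setIntegral_mono_set i2 (Filter.Eventually.of_forall fun s => by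
      have := nn s
      simp only [Pi.zero_apply]; positivity) (HasSubset.Subset.eventuallyLE sub2)
    rw [integral_const_mul] at a1
    rw [v2] at a2
    linarith

lemma Ed_per (t : Fin 3 → ℝ) (z : Fin 3 → ℤ) : Ed ((fun i => (z i : ℝ)) + t) = Ed t := by
  rw [← Ed_eq, ← Ed_eq]
  congr 1
  refine Finset.sum_congr rfl fun i _ => ?_
  congr 1
  have : 2 * Real.pi * ((z i : ℝ) + t i) = 2 * Real.pi * t i + z i * (2 * Real.pi) := by ring
  simp only [Pi.add_apply]
  rw [this, Real.cos_add_int_mul_two_pi]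

lemma betaC_eq : betaC 3 = ∫ t in Set.Icc (0 : Fin 3 → ℝ) 1, 1 / Ed t := by
  unfold betaC greenZ massGreenZ
  simp only [Ed_eq]
  simp

lemma torus_eq (n : ℕ) : torusGreen0 3 n (fun _ => 0) (fun _ => 0) =
    ∑ w ∈ Finset.univ.filter (fun w : Fin 3 → Fin n => ∃ i, (w i : ℕ) ≠ 0), 1/(n:ℝ)^3 * (1 / Ed (pt n w)) := by
  unfold torusGreen0
  rw [Finset.mul_sum]
  refine Finset.sum_congr rfl fun w _ => ?_
  have : eta 3 n w = Ed (pt n w) := by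
    rw [← Ed_eq]; unfold eta pt
    simp only [mul_div_assoc]
  rw [this]
  simp

lemma sum_inv_sq (n : ℕ) (hn : 2 ≤ n) :
    ∑ w ∈ Finset.univ.filter (fun w : Fin 3 → Fin n => ∃ i, (w i : ℕ) ≠ 0), 1 / (Ed (pt n w))^2
      ≤ 11 * (n:ℝ)^4 / (160 * Real.pi^4) * (2204/100) + 11/16 * (n:ℝ)^3 := by
  have hp := Real.pi_pos
  have h1 : ∑ w ∈ Finset.univ.filter (fun w : Fin 3 → Fin n => ∃ i, (w i : ℕ) ≠ 0), 1 / (Ed (pt n w))^2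
      ≤ ∑ w ∈ Finset.univ.filter (fun w : Fin 3 → Fin n => ∃ i, (w i : ℕ) ≠ 0),
       (11 * (n:ℝ)^4 / (160 * Real.pi^4) * (1 / (((srep n (w 0)^2 + srep n (w 1)^2 + srep n (w 2)^2 : ℤ) : ℝ))^2) + 11/16) := by
    refine Finset.sum_le_sum fun w hw => (inv_Ed_sq n w (Finset.mem_filter.1 hw).2).2
  have h2 : ∑ w ∈ Finset.univ.filter (fun w : Fin 3 → Fin n => ∃ i, (w i : ℕ) ≠ 0),
       (11 * (n:ℝ)^4 / (160 * Real.pi^4) * (1 / (((srep n (w 0)^2 + srep n (w 1)^2 + srep n (w 2)^2 : ℤ) : ℝ))^2) + 11/16)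
      ≤ ∑ w : Fin 3 → Fin n,
       (11 * (n:ℝ)^4 / (160 * Real.pi^4) * (1 / (((srep n (w 0)^2 + srep n (w 1)^2 + srep n (w 2)^2 : ℤ) : ℝ))^2) + 11/16) := by
    refine Finset.sum_le_sum_of_subset_of_nonneg (Finset.subset_univ _) (fun w _ _ => by positivity)
  refine h1.trans (h2.trans ?_)
  rw [Finset.sum_add_distrib, ← Finset.mul_sum]
  have h3 := sum_srep_le n hn
  gcongr
  simp
  linarith

/-- In dimension `3`, the diagonal of the zero-average Green's function on
the torus lies strictly below the lattice Green's function at distance of order `1/n`: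
there are `c, C > 0` with `−C/n ≤ G_n^0(0,0) − G_{ℤ³}(0,0) ≤ −c/n` for all large `n`. -/
theorem zero_average_green_diagonal_negative_3d :
    ∃ c C : ℝ, 0 < c ∧ 0 < C ∧ ∃ n0 : ℕ, ∀ n : ℕ, n0 ≤ n →
      -C / n ≤ torusGreen0 3 n (fun _ => 0) (fun _ => 0) - betaC 3 ∧
      torusGreen0 3 n (fun _ => 0) (fun _ => 0) - betaC 3 ≤ -c / n := by
  have hp := Real.pi_pos
  have hpi := Real.pi_gt_d2
  set K : ℝ := 11 * (2204/100) / (160 * Real.pi^2) with hK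
  have hKpos : 0 < K := by positivity
  set D : ℝ := 11/16 * Real.pi^2 with hD
  have hDpos : 0 < D := by positivity
  set c : ℝ := (1/(2*Real.pi) - K)/2 with hc
  have hcpos : 0 < c := by
    have : K < 1/(2*Real.pi) := by
      rw [hK, div_lt_div_iff₀ (by positivity) (by positivity)]
      nlinarith
    rw [hc]; linarith
  refine ⟨c, Real.pi + 31 * (K + D), hcpos, by positivity, max 2 (⌈D/c⌉₊), fun n hn => ?_⟩
  have hn2 : 2 ≤ n := (le_max_left _ _).trans hn
  have hnD : D/c ≤ n := (Nat.le_ceil _).trans (by exact_mod_cast (le_max_right _ _).trans hn)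
  have hn0 : 0 < n := by omega
  have hn' : (0:ℝ) < n := by exact_mod_cast hn0
  have hn1 : (1:ℝ) ≤ n := by exact_mod_cast hn0
  set h : ℝ := 1/(2*(n:ℝ)) with hh
  have hhpos : 0 < h := by positivity
  have hh2 : h ≤ 1/2 := by
    rw [hh]; apply one_div_le_one_div_of_le <;> linarith
  obtain ⟨z0, z1, z2⟩ := zero_cell h hhpos hh2
  set W := Finset.univ.filter (fun w : Fin 3 → Fin n => ∃ i, (w i : ℕ) ≠ 0) with hW
  have hcb := fun w (hw : ∃ i, (w i : ℕ) ≠ 0) => cell_bound n hn0 w (inv_Ed_sq n w hw).1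
  have hw0 : ∀ w : Fin 3 → Fin n, (¬ ∃ i, (w i : ℕ) ≠ 0) → pt n w = 0 := by
    intro w hw
    push Not at hw
    funext i
    simp [pt, hw i]
  have hint : ∀ w : Fin 3 → Fin n, IntegrableOn (fun s => 1 / Ed (pt n w + s)) (cube (1/(2*n))) := by
    intro w
    by_cases hw : ∃ i, (w i : ℕ) ≠ 0
    · exact (hcb w hw).1
    · rw [hw0 w hw]; simp only [zero_add]; exact z0
  have hdec := decomp n hn0 (fun t => 1 / Ed t) (fun t z => by simp only [Ed_per]) hint
  have hsplit := Finset.sum_filter_add_sum_filter_not Finset.univ (fun w : Fin 3 → Fin n => ∃ i, (w i : ℕ) ≠ 0)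
    (fun w => ∫ s in cube h, 1 / Ed (pt n w + s))
  have hsing : ∑ w ∈ Finset.univ.filter (fun w : Fin 3 → Fin n => ¬ ∃ i, (w i : ℕ) ≠ 0), ∫ s in cube h, 1 / Ed (pt n w + s)
      = ∫ s in cube h, 1 / Ed s := by
    have : Finset.univ.filter (fun w : Fin 3 → Fin n => ¬ ∃ i, (w i : ℕ) ≠ 0) = {fun _ => ⟨0, hn0⟩} := by
      ext w
      simp only [Finset.mem_filter, Finset.mem_univ, true_and, Finset.mem_singleton]
      push Not
      constructor
      · intro hw; funext i; ext; exact hw i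
      · rintro rfl i; rfl
    rw [this, Finset.sum_singleton]
    have : pt n (fun _ => ⟨0, hn0⟩) = 0 := by funext i; simp [pt]
    rw [this]; simp
  have hS := sum_inv_sq n hn2
  rw [← hW] at hS hsplit
  set S := ∑ w ∈ W, 1 / (Ed (pt n w))^2 with hSdef
  set T := torusGreen0 3 n (fun _ => 0) (fun _ => 0) with hT
  have hTe : T = ∑ w ∈ W, 1/(n:ℝ)^3 * (1 / Ed (pt n w)) := torus_eq n
  have hlow : T - Real.pi^2/(n:ℝ)^5 * S ≤ ∑ w ∈ W, ∫ s in cube h, 1 / Ed (pt n w + s) := by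
    rw [hTe, hSdef, Finset.mul_sum, ← Finset.sum_sub_distrib]
    exact Finset.sum_le_sum fun w hw => (hcb w (Finset.mem_filter.1 hw).2).2.1
  have hup : ∑ w ∈ W, ∫ s in cube h, 1 / Ed (pt n w + s) ≤ T + 31 * Real.pi^2/(n:ℝ)^5 * S := by
    rw [hTe, hSdef, Finset.mul_sum, ← Finset.sum_add_distrib]
    exact Finset.sum_le_sum fun w hw => (hcb w (Finset.mem_filter.1 hw).2).2.2
  have hG : betaC 3 = ∑ w ∈ W, (∫ s in cube h, 1 / Ed (pt n w + s)) + ∫ s in cube h, 1 / Ed s := by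
    rw [betaC_eq, hdec, ← hsplit, hsing]
  have hS2 : Real.pi^2/(n:ℝ)^5 * S ≤ K/n + D/(n:ℝ)^2 := by
    have e : K/n + D/(n:ℝ)^2 = Real.pi^2/(n:ℝ)^5 * (11 * (n:ℝ)^4 / (160 * Real.pi^4) * (2204/100) + 11/16 * (n:ℝ)^3) := by
      rw [hK, hD]; field_simp
    rw [e]
    gcongr
  have e31 : 31 * Real.pi^2/(n:ℝ)^5 * S = 31 * (Real.pi^2/(n:ℝ)^5 * S) := by ring
  rw [e31] at hup
  have hD2 : D/(n:ℝ)^2 ≤ c/n := by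
    rw [div_le_iff₀ hcpos] at hnD
    rw [div_le_div_iff₀ (by positivity) hn']
    nlinarith
  have hD3 : D/(n:ℝ)^2 ≤ D/n := by
    apply div_le_div_of_nonneg_left hDpos.le hn'
    nlinarith
  have hz1 : h/Real.pi = (1/(2*Real.pi))/n := by rw [hh]; field_simp
  have hz2 : Real.pi * h/2 = (Real.pi/4)/n := by rw [hh]; field_simp; norm_num
  rw [hz1] at z1
  rw [hz2] at z2
  constructor
  · have : -(Real.pi + 31*(K+D))/(n:ℝ) = -(Real.pi/n) - 31 * (K/n + D/n) := by ring
    rw [this]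
    have : (Real.pi/4)/n ≤ Real.pi/n := by gcongr; linarith
    linarith
  · have : -c/(n:ℝ) = c/n - (1/(2*Real.pi))/n + K/n := by rw [hc]; ring
    rw [this]
    linarith

end
end
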